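/- arXiv:2203.08375 — 2 statements merged into one kernel-verified Lean document; each statement's English description precedes it below -/
import Mathlib

section
/- Let (u,p) and (v,q) both be solutions of the steady incompressible Euler system with slip boundary condition in the nozzle Ω. Suppose u₁(x₁,x₂)>0 and v₁(x₁,x₂)>0 for all (x₁,x₂)∈Ω, and that u₁(x₁,x₂)→6Qx₂(1−x₂) and v₁(x₁,x₂)→6Qx₂(1−x₂) as x₁→−∞, uniformly for x₂∈[0,1]. Then u=v everywhere in Ω (i.e., there is at most one such velocity field). -/
open Real Set MeasureTheory

noncomputable section

/-- Partial derivative in the `x₁` direction. -/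
def pd1 (φ : ℝ × ℝ → ℝ) (x : ℝ × ℝ) : ℝ := fderiv ℝ φ x (1, 0)

/-- Partial derivative in the `x₂` direction. -/
def pd2 (φ : ℝ × ℝ → ℝ) (x : ℝ × ℝ) : ℝ := fderiv ℝ φ x (0, 1)

/-- `(u, p)` is a solution of the steady incompressible Euler system in the nozzle `Ω`
bounded by the graphs of `h₀` and `h₁`, with the slip boundary condition:
`u ∈ C²(Ω;ℝ²)`, `u` Lipschitz on the closure of `Ω`, `p ∈ C¹(Ω)`, the Euler equations hold
in `Ω`, and `u₂ = hᵢ' u₁` on both boundary curves. -/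
def IsEulerSlip (h₀ h₁ : ℝ → ℝ) (Ω : Set (ℝ × ℝ)) (u : ℝ × ℝ → ℝ × ℝ)
    (p : ℝ × ℝ → ℝ) : Prop :=
  ContDiffOn ℝ 2 u Ω ∧ (∃ K, LipschitzOnWith K u (closure Ω)) ∧ ContDiffOn ℝ 1 p Ω ∧
  (∀ x ∈ Ω,
    (u x).1 * pd1 (fun y => (u y).1) x + (u x).2 * pd2 (fun y => (u y).1) x + pd1 p x = 0 ∧
    (u x).1 * pd1 (fun y => (u y).2) x + (u x).2 * pd2 (fun y => (u y).2) x + pd2 p x = 0 ∧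
    pd1 (fun y => (u y).1) x + pd2 (fun y => (u y).2) x = 0) ∧
  (∀ x₁ : ℝ, (u (x₁, h₀ x₁)).2 = deriv h₀ x₁ * (u (x₁, h₀ x₁)).1 ∧
             (u (x₁, h₁ x₁)).2 = deriv h₁ x₁ * (u (x₁, h₁ x₁)).1)

open Filter Topology

/-!
In von Mises coordinates `(x, ψ)`, where `ψ` is the stream function, the Euler equations say that
the Bernoulli head is constant along streamlines, so `b ∂ₓb + a ∂ₓa + ∂ₓP = 0`, and that
`∂ₓb + ∂ψP = 0`. Upstream the flow is parallel and its pressure is constant, so the far field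
determines the head of each streamline up to a common constant, and two solutions differ by a pair
with `P - P' = k + (|u'|² - |u|²) / 2`. If `y`, `y'` are the heights of the streamlines, then the
divergence of `((b - b')(y - y'), (P - P' - k)(y - y'))` is a positive definite quadratic form in
the difference of the velocities. The flux of this field through the walls `ψ = 0, m` vanishes
because the streamlines there are the same, and its flux through a vertical section is bounded and
controlled by the square root of the energy on that section. So the energy in `[-X, X]`, if it did
not vanish, would have to grow linearly in `X` while being bounded by this flux.
-/

/-! ### Real functions of one variable -/

theorem tendsto_of_monotoneOn_of_tendsto {ι α β : Type*} [LinearOrder α] [TopologicalSpace α]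
    [OrderTopology α] [LinearOrder β] [TopologicalSpace β] [OrderClosedTopology β]
    {l : Filter ι} {f : ι → α → β} {g : α → β} {σ : ι → α} {a b s : α}
    (hf : ∀ i, MonotoneOn (f i) (Icc a b)) (hg : StrictMonoOn g (Icc a b))
    (hfg : ∀ r ∈ Icc a b, Tendsto (f · r) l (𝓝 (g r))) (hσ : ∀ i, σ i ∈ Icc a b)
    (hs : s ∈ Icc a b) (h : Tendsto (fun i => f i (σ i)) l (𝓝 (g s))) :
    Tendsto σ l (𝓝 s) := by
  refine tendsto_order.2 ⟨fun r hr => ?_, fun r hr => ?_⟩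
  · by_cases har : a ≤ r
    · have hrI : r ∈ Icc a b := ⟨har, hr.le.trans hs.2⟩
      filter_upwards [(hfg r hrI).eventually_lt h (hg hrI hs hr)] with i hi
        using (hf i).reflect_lt hrI (hσ i) hi
    · exact .of_forall fun i => (not_le.1 har).trans_le (hσ i).1
  · by_cases hrb : r ≤ b
    · have hrI : r ∈ Icc a b := ⟨hs.1.trans hr.le, hrb⟩
      filter_upwards [h.eventually_lt (hfg r hrI) (hg hs hrI hr)] with i hi
        using (hf i).reflect_lt (hσ i) hrI hi
    · exact .of_forall fun i => (hσ i).2.trans_lt (not_le.1 hrb)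

/-- The inverse of a continuous increasing function `f` on `[a, b]`, extended by the constants
`a` and `b` outside `[f a, f b]`. -/
def invIcc (a b : ℝ) (f : ℝ → ℝ) (t : ℝ) : ℝ :=
  Function.invFunOn f (Icc a b) (max (f a) (min t (f b)))

section invIcc

variable {a b : ℝ} {f : ℝ → ℝ}

theorem exists_mem_Icc_apply_eq_clamp (hab : a ≤ b) (hf : ContinuousOn f (Icc a b))
    (hle : f a ≤ f b) (t : ℝ) : ∃ s ∈ Icc a b, f s = max (f a) (min t (f b)) :=
  intermediate_value_Icc hab hf ⟨le_max_left _ _, max_le hle (min_le_right _ _)⟩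

theorem invIcc_mem_Icc (hab : a ≤ b) (hf : ContinuousOn f (Icc a b)) (hle : f a ≤ f b) (t : ℝ) :
    invIcc a b f t ∈ Icc a b :=
  Function.invFunOn_mem (exists_mem_Icc_apply_eq_clamp hab hf hle t)

theorem apply_invIcc (hab : a ≤ b) (hf : ContinuousOn f (Icc a b)) (hle : f a ≤ f b) (t : ℝ) :
    f (invIcc a b f t) = max (f a) (min t (f b)) :=
  Function.invFunOn_eq (exists_mem_Icc_apply_eq_clamp hab hf hle t)

theorem apply_invIcc_of_mem (hab : a ≤ b) (hf : ContinuousOn f (Icc a b)) {t : ℝ}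
    (ht : t ∈ Icc (f a) (f b)) : f (invIcc a b f t) = t := by
  rw [apply_invIcc hab hf (ht.1.trans ht.2), min_eq_left ht.2, max_eq_right ht.1]

theorem invIcc_apply (hf : ContinuousOn f (Icc a b)) (hmono : StrictMonoOn f (Icc a b)) {s : ℝ}
    (hs : s ∈ Icc a b) : invIcc a b f (f s) = s := by
  have hab : a ≤ b := hs.1.trans hs.2
  have hfs : f s ∈ Icc (f a) (f b) :=
    ⟨hmono.monotoneOn (left_mem_Icc.2 hab) hs hs.1, hmono.monotoneOn hs (right_mem_Icc.2 hab) hs.2⟩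
  exact hmono.injOn (invIcc_mem_Icc hab hf (hfs.1.trans hfs.2) _) hs
    (apply_invIcc_of_mem hab hf hfs)

theorem invIcc_mem_Ioo (hab : a ≤ b) (hf : ContinuousOn f (Icc a b)) {t : ℝ}
    (ht : t ∈ Ioo (f a) (f b)) : invIcc a b f t ∈ Ioo a b := by
  have hmem := invIcc_mem_Icc hab hf (ht.1.trans ht.2).le t
  have happly := apply_invIcc_of_mem hab hf (Ioo_subset_Icc_self ht)
  refine ⟨hmem.1.lt_of_ne fun h => ht.1.ne ?_, hmem.2.lt_of_ne fun h => ht.2.ne ?_⟩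
  · rw [← happly, ← h]
  · rw [← happly, h]

theorem tendsto_invIcc {ι : Type*} {l : Filter ι} {F : ι → ℝ → ℝ} {τ : ι → ℝ} {t : ℝ}
    (hab : a ≤ b) (hF : ∀ i, ContinuousOn (F i) (Icc a b))
    (hFmono : ∀ i, MonotoneOn (F i) (Icc a b)) (hf : ContinuousOn f (Icc a b))
    (hmono : StrictMonoOn f (Icc a b)) (hlim : ∀ s ∈ Icc a b, Tendsto (F · s) l (𝓝 (f s)))
    (hτ : Tendsto τ l (𝓝 t)) :
    Tendsto (fun i => invIcc a b (F i) (τ i)) l (𝓝 (invIcc a b f t)) := by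
  have ha := left_mem_Icc.2 hab
  have hb := right_mem_Icc.2 hab
  have hFle := fun i => hFmono i ha hb hab
  have hfle := hmono.monotoneOn ha hb hab
  refine tendsto_of_monotoneOn_of_tendsto hFmono hmono hlim
    (fun i => invIcc_mem_Icc hab (hF i) (hFle i) _) (invIcc_mem_Icc hab hf hfle t) ?_
  simp only [apply_invIcc hab (hF _) (hFle _), apply_invIcc hab hf hfle]
  exact (hlim a ha).max (hτ.min (hlim b hb))

end invIcc

-- Barbalat's lemma, at `-∞`.
theorem tendsto_deriv_zero_atBot {F f : ℝ → ℝ} {L ℓ : ℝ}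
    (hderiv : ∀ x ≤ L, HasDerivAt F (f x) x) (hf : UniformContinuousOn f (Iic L))
    (hF : Tendsto F atBot (𝓝 ℓ)) : Tendsto f atBot (𝓝 0) := by
  refine Metric.tendsto_nhds.2 fun ε hε => ?_
  obtain ⟨δ, hδ, hosc⟩ := Metric.uniformContinuousOn_iff.1 hf (ε / 2) (half_pos hε)
  have hincr : Tendsto (fun x => (F x - F (x - δ / 2)) / (δ / 2)) atBot (𝓝 0) := by
    have hshift : Tendsto (fun x : ℝ => x - δ / 2) atBot atBot :=
      tendsto_atBot_add_const_right _ _ tendsto_id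
    simpa using (hF.sub (hF.comp hshift)).div_const (δ / 2)
  filter_upwards [Metric.tendsto_nhds.1 hincr (ε / 2) (half_pos hε), eventually_le_atBot L]
    with x hx hxL
  have hderiv' : ∀ z ∈ Icc (x - δ / 2) x, HasDerivAt F (f z) z :=
    fun z hz => hderiv z (hz.2.trans hxL)
  obtain ⟨c, hc, hslope⟩ := exists_hasDerivAt_eq_slope F f (by linarith : x - δ / 2 < x)
    (fun z hz => (hderiv' z hz).continuousAt.continuousWithinAt)
    (fun z hz => hderiv' z (Ioo_subset_Icc_self hz))
  rw [sub_sub_cancel] at hslope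
  rw [← hslope] at hx
  have hxc : dist x c < δ := by
    rw [Real.dist_eq, abs_of_pos (sub_pos.2 hc.2)]
    linarith [hc.1]
  calc dist (f x) 0 ≤ dist (f x) (f c) + dist (f c) 0 := dist_triangle _ _ _
    _ < ε / 2 + ε / 2 := add_lt_add (hosc x hxL c (hc.2.le.trans hxL) hxc) hx
    _ = ε := add_halves ε

theorem tendsto_integral_sub_one_atBot {f : ℝ → ℝ} {ℓ : ℝ} (hf : Continuous f)
    (hlim : Tendsto f atBot (𝓝 ℓ)) :
    Tendsto (fun x => ∫ t in (x - 1)..x, f t) atBot (𝓝 ℓ) := by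
  have hmean (x : ℝ) : ∃ c ∈ Ioo (x - 1) x, f c = ∫ t in (x - 1)..x, f t := by
    have := exists_eq_interval_average (sub_one_lt x).ne hf.continuousOn
    simpa only [interval_average_eq, sub_sub_cancel, inv_one, one_smul, uIoo_of_lt (sub_one_lt x)]
      using this
  choose c hc hfc using hmean
  simp only [← hfc]
  exact hlim.comp (tendsto_atBot_mono (fun x => (hc x).2.le) tendsto_id)

theorem tendstoUniformlyOn_atBot_of_forall_exists {f : ℝ → ℝ → ℝ} {g : ℝ → ℝ} {I : Set ℝ}
    (h : ∀ ε > 0, ∃ M : ℝ, ∀ x ≤ M, ∀ s ∈ I, |f x s - g s| < ε) :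
    TendstoUniformlyOn f g atBot I := by
  refine Metric.tendstoUniformlyOn_iff.2 fun ε hε => ?_
  obtain ⟨M, hM⟩ := h ε hε
  filter_upwards [eventually_le_atBot M] with x hx s hs
  rw [dist_comm]
  exact hM x hx s hs

theorem sq_integral_le {f : ℝ → ℝ} {a b : ℝ} (hab : a ≤ b) (hf : ContinuousOn f (Icc a b)) :
    (∫ x in a..b, f x) ^ 2 ≤ (b - a) * ∫ x in a..b, f x ^ 2 := by
  rw [← uIcc_of_le hab] at hf
  have hf₁ : IntervalIntegrable f volume a b := hf.intervalIntegrable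
  have hf₂ : IntervalIntegrable (fun x => f x ^ 2) volume a b := (hf.pow 2).intervalIntegrable
  have hvar : 0 ≤ ∫ x in a..b, ((b - a) * f x - ∫ t in a..b, f t) ^ 2 :=
    intervalIntegral.integral_nonneg hab fun x _ => sq_nonneg _
  set I := ∫ t in a..b, f t with hI
  have hexpand : ∫ x in a..b, ((b - a) * f x - I) ^ 2 =
      (b - a) * ((b - a) * (∫ x in a..b, f x ^ 2) - I ^ 2) := by
    have : ∀ x, ((b - a) * f x - I) ^ 2 =
        (b - a) ^ 2 * f x ^ 2 - 2 * (b - a) * I * f x + I ^ 2 := fun x => by ring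
    simp only [this]
    rw [intervalIntegral.integral_add ((hf₂.const_mul _).sub (hf₁.const_mul _)) (by simp),
      intervalIntegral.integral_sub (hf₂.const_mul _) (hf₁.const_mul _)]
    simp only [intervalIntegral.integral_const_mul, intervalIntegral.integral_const, smul_eq_mul,
      ← hI]
    ring
  rcases hab.eq_or_lt with rfl | hab
  · simp [hI]
  · rw [hexpand] at hvar
    linarith [nonneg_of_mul_nonneg_right hvar (sub_pos.2 hab)]

theorem bddAbove_range_of_eq_const {f : ℝ → ℝ} (hf : Continuous f) {L R l r : ℝ}
    (hl : ∀ x ≤ L, f x = l) (hr : ∀ x ≥ R, f x = r) : BddAbove (range f) := by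
  obtain ⟨B, hB⟩ := (isCompact_Icc.image hf : IsCompact (f '' Icc L R)).bddAbove
  refine ⟨max B (max l r), forall_mem_range.2 fun x => ?_⟩
  rcases le_total x L with hxL | hLx
  · simp [hl x hxL]
  rcases le_total R x with hRx | hxR
  · simp [hr x hRx]
  · exact le_max_of_le_left (hB (mem_image_of_mem f ⟨hLx, hxR⟩))

/-! ### The divergence theorem on boxes and strips -/

/-- The linear form `(s, t) ↦ a * s + b * t` on the plane. -/
def planeForm (a b : ℝ) : ℝ × ℝ →L[ℝ] ℝ :=
  a • ContinuousLinearMap.fst ℝ ℝ ℝ + b • ContinuousLinearMap.snd ℝ ℝ ℝ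

@[simp]
theorem planeForm_apply (a b : ℝ) (w : ℝ × ℝ) : planeForm a b w = a * w.1 + b * w.2 := by
  simp [planeForm]

theorem fderiv_eq_planeForm (φ : ℝ × ℝ → ℝ) (w : ℝ × ℝ) :
    fderiv ℝ φ w = planeForm (pd1 φ w) (pd2 φ w) := by
  ext <;> simp [pd1, pd2]

theorem hasFDerivAt_planeForm {φ : ℝ × ℝ → ℝ} {w : ℝ × ℝ} (hφ : DifferentiableAt ℝ φ w) :
    HasFDerivAt φ (planeForm (pd1 φ w) (pd2 φ w)) w :=
  fderiv_eq_planeForm φ w ▸ hφ.hasFDerivAt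

theorem pd1_eq_of_hasFDerivAt {φ : ℝ × ℝ → ℝ} {w : ℝ × ℝ} {a b : ℝ}
    (h : HasFDerivAt φ (planeForm a b) w) : pd1 φ w = a := by
  simp [pd1, h.fderiv]

theorem pd2_eq_of_hasFDerivAt {φ : ℝ × ℝ → ℝ} {w : ℝ × ℝ} {a b : ℝ}
    (h : HasFDerivAt φ (planeForm a b) w) : pd2 φ w = b := by
  simp [pd2, h.fderiv]

-- The derivatives are only integrable through their sum `S`, so the field `(S, 0)` stands in for
-- them on the edges, where `f` and `g` need not be differentiable.
theorem integral_box_of_divergence_eq {f g S : ℝ × ℝ → ℝ} {x₀ x₁ s t : ℝ}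
    (hf : ContinuousOn f (uIcc x₀ x₁ ×ˢ uIcc s t)) (hg : ContinuousOn g (uIcc x₀ x₁ ×ˢ uIcc s t))
    (hS : ContinuousOn S (uIcc x₀ x₁ ×ˢ uIcc s t))
    (df : ∀ w ∈ uIoo x₀ x₁ ×ˢ uIoo s t, DifferentiableAt ℝ f w)
    (dg : ∀ w ∈ uIoo x₀ x₁ ×ˢ uIoo s t, DifferentiableAt ℝ g w)
    (hdiv : ∀ w ∈ uIoo x₀ x₁ ×ˢ uIoo s t, pd1 f w + pd2 g w = S w) :
    ∫ x in x₀..x₁, ∫ r in s..t, S (x, r) =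
      (((∫ x in x₀..x₁, g (x, t)) - ∫ x in x₀..x₁, g (x, s)) + ∫ r in s..t, f (x₁, r)) -
        ∫ r in s..t, f (x₀, r) := by
  classical
  set box := uIoo x₀ x₁ ×ˢ uIoo s t
  set f' := fun w => if w ∈ box then fderiv ℝ f w else planeForm (S w) 0 with hf'
  set g' := fun w => if w ∈ box then fderiv ℝ g w else 0 with hg'
  have hS_eq : ∀ w, f' w (1, 0) + g' w (0, 1) = S w := fun w => by
    by_cases hw : w ∈ box
    · simpa only [hf', hg', if_pos hw, pd1, pd2] using hdiv w hw
    · simp [hf', hg', if_neg hw]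
  have key := integral2_divergence_prod_of_hasFDerivAt f g f' g' x₀ s x₁ t hf hg
    (fun w hw => by simpa only [hf', if_pos (show w ∈ box from hw)] using (df w hw).hasFDerivAt)
    (fun w hw => by simpa only [hg', if_pos (show w ∈ box from hw)] using (dg w hw).hasFDerivAt)
    (by simpa only [hS_eq] using hS.integrableOn_compact (isCompact_uIcc.prod isCompact_uIcc))
  simpa only [hS_eq] using key

theorem integral_strip_of_divergence_eq {f g S : ℝ × ℝ → ℝ} {I : Set ℝ} (hI : I.OrdConnected)
    (df : ∀ w : ℝ × ℝ, w.2 ∈ I → DifferentiableAt ℝ f w)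
    (dg : ∀ w : ℝ × ℝ, w.2 ∈ I → DifferentiableAt ℝ g w)
    (hdiv : ∀ w : ℝ × ℝ, w.2 ∈ I → pd1 f w + pd2 g w = S w)
    (hS : ContinuousOn S (Prod.snd ⁻¹' I)) (x₀ x₁ : ℝ) {s t : ℝ} (hs : s ∈ I) (ht : t ∈ I) :
    ∫ x in x₀..x₁, ∫ r in s..t, S (x, r) =
      (((∫ x in x₀..x₁, g (x, t)) - ∫ x in x₀..x₁, g (x, s)) + ∫ r in s..t, f (x₁, r)) -
        ∫ r in s..t, f (x₀, r) := by
  have hbox : ∀ w ∈ uIcc x₀ x₁ ×ˢ uIcc s t, w.2 ∈ I := fun w hw => hI.uIcc_subset hs ht hw.2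
  have hbox' : ∀ w ∈ uIoo x₀ x₁ ×ˢ uIoo s t, w.2 ∈ I := fun w hw =>
    hbox w ⟨uIoo_subset_uIcc_self hw.1, uIoo_subset_uIcc_self hw.2⟩
  exact integral_box_of_divergence_eq
    (fun w hw => (df w (hbox w hw)).continuousAt.continuousWithinAt)
    (fun w hw => (dg w (hbox w hw)).continuousAt.continuousWithinAt) (hS.mono hbox)
    (fun w hw => df w (hbox' w hw)) (fun w hw => dg w (hbox' w hw))
    (fun w hw => hdiv w (hbox' w hw))

theorem continuous_integral_of_continuousOn_strip {S : ℝ × ℝ → ℝ} {I : Set ℝ}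
    (hI : I.OrdConnected) (hS : ContinuousOn S (Prod.snd ⁻¹' I)) {s t : ℝ} (hs : s ∈ I)
    (ht : t ∈ I) (hst : s ≤ t) : Continuous fun x => ∫ r in s..t, S (x, r) := by
  have hclamp : Continuous fun w : ℝ × ℝ => S (w.1, projIcc s t hst w.2) :=
    hS.comp_continuous (f := fun w : ℝ × ℝ => (w.1, (projIcc s t hst w.2 : ℝ))) (by fun_prop)
      fun w => hI.out hs ht (projIcc s t hst w.2).2
  refine (intervalIntegral.continuous_parametric_intervalIntegral_of_continuous'
    (μ := volume) (f := fun x r => S (x, projIcc s t hst r)) hclamp s t).congr fun x => ?_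
  refine intervalIntegral.integral_congr fun r hr => ?_
  rw [uIcc_of_le hst] at hr
  simp only [projIcc_of_mem hst hr]

/-! ### Stream functions on a strip -/

/-- A divergence-free field `(A, B)` on the strip `ℝ × [0, 1]` which is tangent to the walls and
crosses every vertical section from left to right. It is extended continuously to the plane; the
values outside the strip are immaterial. -/
structure IsStripFlow (A B : ℝ × ℝ → ℝ) : Prop where
  continuous_axial : Continuous A
  continuous_cross : Continuous B
  differentiableAt_axial : ∀ w : ℝ × ℝ, w.2 ∈ Ioo (0 : ℝ) 1 → DifferentiableAt ℝ A w
  differentiableAt_cross : ∀ w : ℝ × ℝ, w.2 ∈ Ioo (0 : ℝ) 1 → DifferentiableAt ℝ B w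
  divergence_eq_zero : ∀ w : ℝ × ℝ, w.2 ∈ Ioo (0 : ℝ) 1 → pd1 A w + pd2 B w = 0
  tangent_bottom : ∀ x, B (x, 0) = 0
  tangent_top : ∀ x, B (x, 1) = 0
  pos : ∀ w : ℝ × ℝ, w.2 ∈ Ioo (0 : ℝ) 1 → 0 < A w

/-- The stream function of a field on the strip with first component `A`: the flux through the
part of the vertical section below a given point. -/
def streamFn (A : ℝ × ℝ → ℝ) (w : ℝ × ℝ) : ℝ := ∫ t in (0 : ℝ)..w.2, A (w.1, t)

/-- The height `s` at which the stream function takes the value `w.2` on the section through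
`w.1`. -/
def level (A : ℝ × ℝ → ℝ) (w : ℝ × ℝ) : ℝ := invIcc 0 1 (fun s => streamFn A (w.1, s)) w.2

@[simp]
theorem streamFn_zero (A : ℝ × ℝ → ℝ) (x : ℝ) : streamFn A (x, 0) = 0 := by simp [streamFn]

theorem continuous_streamFn {A : ℝ × ℝ → ℝ} (hA : Continuous A) : Continuous (streamFn A) :=
  intervalIntegral.continuous_parametric_intervalIntegral_of_continuous
    (f := fun (w : ℝ × ℝ) t => A (w.1, t)) (by fun_prop) continuous_snd

theorem strictMonoOn_integral_of_pos {f : ℝ → ℝ} {a b : ℝ} (hf : ContinuousOn f (Icc a b))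
    (hpos : ∀ s ∈ Ioo a b, 0 < f s) : StrictMonoOn (fun s => ∫ t in a..s, f t) (Icc a b) := by
  intro s hs t ht hst
  have hint : ∀ {r}, r ∈ Icc a b → IntervalIntegrable f volume a r := fun {r} hr =>
    (hf.mono <| uIcc_of_le hr.1 ▸ Icc_subset_Icc_right hr.2).intervalIntegrable
  have hincr := intervalIntegral.integral_interval_sub_left (hint ht) (hint hs)
  have : 0 < ∫ r in s..t, f r :=
    intervalIntegral.intervalIntegral_pos_of_pos_on ((hint hs).symm.trans (hint ht))
      (fun r hr => hpos r ⟨hs.1.trans_lt hr.1, hr.2.trans_le ht.2⟩) hst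
  exact sub_pos.1 (hincr ▸ this)

namespace IsStripFlow

variable {A B : ℝ × ℝ → ℝ}

theorem streamFn_sub_streamFn (F : IsStripFlow A B) (x₀ x₁ : ℝ) {s : ℝ} (hs : s ∈ Icc (0 : ℝ) 1) :
    streamFn A (x₁, s) - streamFn A (x₀, s) = -∫ x in x₀..x₁, B (x, s) := by
  have hmem : ∀ w ∈ uIoo x₀ x₁ ×ˢ uIoo 0 s, w.2 ∈ Ioo (0 : ℝ) 1 := fun w hw => by
    rw [uIoo_of_le hs.1] at hw
    exact Ioo_subset_Ioo_right hs.2 hw.2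
  have key := integral_box_of_divergence_eq (S := fun _ => 0)
    F.continuous_axial.continuousOn F.continuous_cross.continuousOn continuousOn_const
    (fun w hw => F.differentiableAt_axial w (hmem w hw))
    (fun w hw => F.differentiableAt_cross w (hmem w hw))
    (fun w hw => F.divergence_eq_zero w (hmem w hw))
  simp only [intervalIntegral.integral_zero, F.tangent_bottom] at key
  simp only [streamFn]
  linarith

theorem streamFn_one_eq (F : IsStripFlow A B) (x₀ x₁ : ℝ) :
    streamFn A (x₁, 1) = streamFn A (x₀, 1) := by
  have := F.streamFn_sub_streamFn x₀ x₁ (right_mem_Icc.2 zero_le_one)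
  simp only [F.tangent_top, intervalIntegral.integral_zero, neg_zero] at this
  exact sub_eq_zero.1 this

theorem hasDerivAt_streamFn_fst (F : IsStripFlow A B) (x : ℝ) {s : ℝ} (hs : s ∈ Icc (0 : ℝ) 1) :
    HasDerivAt (fun x => streamFn A (x, s)) (-B (x, s)) x := by
  have hB : Continuous fun x => B (x, s) := F.continuous_cross.comp (by fun_prop)
  have hfun : (fun x => streamFn A (x, s)) =
      fun z => streamFn A (x, s) - ∫ t in x..z, B (t, s) := funext fun z => by
    linarith [F.streamFn_sub_streamFn x z hs]
  rw [hfun]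
  exact (hB.integral_hasStrictDerivAt x x).hasDerivAt.const_sub _

theorem hasFDerivAt_streamFn (F : IsStripFlow A B) {w : ℝ × ℝ} (hw : w.2 ∈ Ioo (0 : ℝ) 1) :
    HasFDerivAt (streamFn A) (planeForm (-B w) (A w)) w := by
  have hA := F.continuous_axial
  have hB := F.continuous_cross
  have hstrip : ∀ᶠ z : ℝ × ℝ in 𝓝 w, z.2 ∈ Ioo (0 : ℝ) 1 :=
    (isOpen_Ioo.preimage continuous_snd).mem_nhds hw
  have key := hasStrictFDerivAt_uncurry_coprod (𝕜 := ℝ) (u := w)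
    (f := fun x s => streamFn A (x, s))
    (f₁ := fun x s => .toSpanSingleton ℝ (-B (x, s)))
    (f₂ := fun x s => .toSpanSingleton ℝ (A (x, s)))
    (hstrip.mono fun z hz => F.hasDerivAt_streamFn_fst z.1 (Ioo_subset_Icc_self hz))
    (.of_forall fun z => ((hA.comp (by fun_prop : Continuous fun s : ℝ => (z.1, s)))
      |>.integral_hasStrictDerivAt 0 z.2).hasDerivAt)
    (((ContinuousLinearMap.toSpanSingletonCLE (𝕜 := ℝ)).continuous.comp hB.neg).continuousAt)
    (((ContinuousLinearMap.toSpanSingletonCLE (𝕜 := ℝ)).continuous.comp hA).continuousAt)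
  refine key.hasFDerivAt.congr_fderiv ?_
  ext <;> simp [Function.HasUncurry.uncurry]

theorem strictMonoOn_streamFn (F : IsStripFlow A B) (x : ℝ) :
    StrictMonoOn (fun s => streamFn A (x, s)) (Icc 0 1) :=
  strictMonoOn_integral_of_pos
    (F.continuous_axial.comp (by fun_prop : Continuous fun s : ℝ => (x, s))).continuousOn
    fun _ hs => F.pos _ hs

theorem continuousOn_streamFn (F : IsStripFlow A B) (x : ℝ) :
    ContinuousOn (fun s => streamFn A (x, s)) (Icc 0 1) :=
  ((continuous_streamFn F.continuous_axial).comp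
    (by fun_prop : Continuous fun s : ℝ => (x, s))).continuousOn

theorem continuous_level (F : IsStripFlow A B) : Continuous (level A) :=
  continuous_iff_continuousAt.2 fun w =>
    tendsto_invIcc zero_le_one (fun z => F.continuousOn_streamFn z.1)
      (fun z => (F.strictMonoOn_streamFn z.1).monotoneOn) (F.continuousOn_streamFn w.1)
      (F.strictMonoOn_streamFn w.1)
      (fun _ _ => ((continuous_streamFn F.continuous_axial).comp
        (by fun_prop : Continuous fun z : ℝ × ℝ => (z.1, _))).tendsto w)
      (continuous_snd.tendsto w)

theorem level_mem_Icc (F : IsStripFlow A B) (w : ℝ × ℝ) : level A w ∈ Icc (0 : ℝ) 1 :=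
  invIcc_mem_Icc zero_le_one (F.continuousOn_streamFn w.1)
    ((F.strictMonoOn_streamFn w.1).monotoneOn (left_mem_Icc.2 zero_le_one)
      (right_mem_Icc.2 zero_le_one) zero_le_one) w.2

theorem level_streamFn (F : IsStripFlow A B) (x : ℝ) {s : ℝ} (hs : s ∈ Icc (0 : ℝ) 1) :
    level A (x, streamFn A (x, s)) = s :=
  invIcc_apply (F.continuousOn_streamFn x) (F.strictMonoOn_streamFn x) hs

variable {m : ℝ}

theorem level_mem_Ioo (F : IsStripFlow A B) (hm : ∀ x, streamFn A (x, 1) = m) {w : ℝ × ℝ}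
    (hw : w.2 ∈ Ioo 0 m) : level A w ∈ Ioo (0 : ℝ) 1 :=
  invIcc_mem_Ioo zero_le_one (F.continuousOn_streamFn w.1) (by simpa [hm] using hw)

theorem streamFn_level (F : IsStripFlow A B) (hm : ∀ x, streamFn A (x, 1) = m) {w : ℝ × ℝ}
    (hw : w.2 ∈ Ioo 0 m) : streamFn A (w.1, level A w) = w.2 :=
  apply_invIcc_of_mem zero_le_one (F.continuousOn_streamFn w.1)
    (by simpa [hm] using Ioo_subset_Icc_self hw)

theorem hasFDerivAt_level (F : IsStripFlow A B) (hm : ∀ x, streamFn A (x, 1) = m) {w : ℝ × ℝ}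
    (hw : w.2 ∈ Ioo 0 m) :
    HasFDerivAt (level A)
      (planeForm (B (w.1, level A w) / A (w.1, level A w)) (1 / A (w.1, level A w))) w := by
  have hs := F.level_mem_Ioo hm hw
  have hpos : A (w.1, level A w) ≠ 0 := (F.pos (w.1, level A w) hs).ne'
  have hstream := F.hasFDerivAt_streamFn (w := (w.1, level A w)) hs
  set α := A (w.1, level A w)
  set β := B (w.1, level A w)
  have hpair : HasFDerivAt (fun z : ℝ × ℝ => (z.1, streamFn A z))
      ((ContinuousLinearMap.fst ℝ ℝ ℝ).prod (planeForm (-β) α)) (w.1, level A w) :=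
    hasFDerivAt_fst.prodMk hstream
  have hinv : HasFDerivAt (fun z : ℝ × ℝ => (z.1, level A z))
      ((ContinuousLinearMap.fst ℝ ℝ ℝ).prod (planeForm (β / α) (1 / α))) w := by
    refine (hpair.of_comp_of_leftInverse
      (f'symm := (ContinuousLinearMap.fst ℝ ℝ ℝ).prod (planeForm (β / α) (1 / α)))
      (continuousAt_fst.prodMk F.continuous_level.continuousAt) (hasFDerivAt_id _) ?_
      ?_).congr_fderiv (ContinuousLinearMap.comp_id _)
    · filter_upwards [(isOpen_Ioo.preimage continuous_snd).mem_nhds hw] with z hz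
      exact Prod.ext rfl (F.streamFn_level hm hz)
    · rintro ⟨s, t⟩
      refine Prod.ext rfl ?_
      simp only [ContinuousLinearMap.prod_apply, planeForm_apply, ContinuousLinearMap.coe_fst']
      field_simp
      ring
  exact hinv.snd

end IsStripFlow

/-! ### Euler flows in von Mises coordinates -/

-- The hypothesis `hflux` bounds the energy in `[-X, X]` by the energy at its ends, so that if it
-- did not vanish, it would have to grow linearly in `X`.
theorem sq_mul_sub_le_of_energy_le_flux {e j : ℝ → ℝ} {c C N X₀ X₁ : ℝ} (he : Continuous e)
    (he₀ : ∀ x, 0 ≤ e x) (hC : 0 ≤ C) (hc : 0 ≤ c) (hj : ∀ x, j x ^ 2 ≤ C * e x)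
    (hN : ∀ x, |j x| ≤ N) (hX₀ : 0 ≤ X₀) (hX : X₀ ≤ X₁) (hlow : c ≤ ∫ x in (-X₀)..X₀, e x)
    (hflux : ∀ X ∈ Icc X₀ X₁, ∫ x in (-X)..X, e x ≤ c / 2 + |j X| + |j (-X)|) :
    c ^ 2 * (X₁ - X₀) ≤ 8 * C * (c / 2 + 2 * N) := by
  have hint : ∀ x y, IntervalIntegrable e volume x y := fun _ _ => he.intervalIntegrable _ _
  have hends : ∀ X ∈ Icc X₀ X₁, c ^ 2 ≤ 8 * C * (e X + e (-X)) := fun X hXI => by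
    have hmono : ∫ x in (-X₀)..X₀, e x ≤ ∫ x in (-X)..X, e x :=
      intervalIntegral.integral_mono_interval (by linarith [hXI.1]) (by linarith) hXI.1
        (.of_forall he₀) (hint _ _)
    have hsum : c / 2 ≤ |j X| + |j (-X)| := by linarith [hflux X hXI]
    nlinarith [hj X, hj (-X), sq_abs (j X), sq_abs (j (-X)), sq_nonneg (|j X| - |j (-X)|)]
  have hneg : Continuous fun x => e (-x) := by fun_prop
  calc c ^ 2 * (X₁ - X₀) = ∫ _ in X₀..X₁, c ^ 2 := by
        simp only [intervalIntegral.integral_const, smul_eq_mul, mul_comm]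
    _ ≤ ∫ x in X₀..X₁, 8 * C * (e x + e (-x)) :=
        intervalIntegral.integral_mono_on hX (by simp)
          (((he.add hneg).const_mul _).intervalIntegrable _ _) hends
    _ = 8 * C * ((∫ x in X₀..X₁, e x) + ∫ x in (-X₁)..(-X₀), e x) := by
        rw [intervalIntegral.integral_const_mul, intervalIntegral.integral_add (hint _ _)
          (hneg.intervalIntegrable _ _), intervalIntegral.integral_comp_neg]
    _ ≤ 8 * C * ∫ x in (-X₁)..X₁, e x := by
        have hmid : 0 ≤ ∫ x in (-X₀)..X₀, e x := hc.trans hlow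
        have hsplit : ∫ x in (-X₁)..X₁, e x = (∫ x in (-X₁)..(-X₀), e x) +
            (∫ x in (-X₀)..X₀, e x) + ∫ x in X₀..X₁, e x := by
          rw [intervalIntegral.integral_add_adjacent_intervals (hint _ _) (hint _ _),
            intervalIntegral.integral_add_adjacent_intervals (hint _ _) (hint _ _)]
        gcongr
        linarith [hmid]
    _ ≤ 8 * C * (c / 2 + 2 * N) := by
        gcongr
        linarith [hflux X₁ (right_mem_Icc.2 hX), hN X₁, hN (-X₁)]

/-- A steady Euler flow in von Mises coordinates `(x, ψ)`, where `x` is the horizontal coordinate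
and `ψ ∈ (0, m)` the stream function: `y` is the height of the streamlines, `(a, b)` the velocity,
which is bounded by `M`, and `P` the pressure. Upstream the flow is parallel, with speed `V ψ`. The
values of `a`, `b`, `P` outside the strip are immaterial, but those of `y` on its edges are the
walls. -/
structure IsStreamFlow (m M : ℝ) (V : ℝ → ℝ) (y a b P : ℝ × ℝ → ℝ) : Prop where
  continuous_height : Continuous y
  hasFDerivAt_height : ∀ w : ℝ × ℝ, w.2 ∈ Ioo 0 m →
    HasFDerivAt y (planeForm (b w / a w) (1 / a w)) w
  axial_pos : ∀ w : ℝ × ℝ, w.2 ∈ Ioo 0 m → 0 < a w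
  axial_le : ∀ w : ℝ × ℝ, w.2 ∈ Ioo 0 m → a w ≤ M
  abs_cross_le : ∀ w : ℝ × ℝ, w.2 ∈ Ioo 0 m → |b w| ≤ M
  differentiableAt_axial : ∀ w : ℝ × ℝ, w.2 ∈ Ioo 0 m → DifferentiableAt ℝ a w
  differentiableAt_cross : ∀ w : ℝ × ℝ, w.2 ∈ Ioo 0 m → DifferentiableAt ℝ b w
  differentiableAt_pressure : ∀ w : ℝ × ℝ, w.2 ∈ Ioo 0 m → DifferentiableAt ℝ P w
  bernoulli : ∀ w : ℝ × ℝ, w.2 ∈ Ioo 0 m → a w * pd1 a w + b w * pd1 b w + pd1 P w = 0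
  momentum_cross : ∀ w : ℝ × ℝ, w.2 ∈ Ioo 0 m → pd1 b w + pd2 P w = 0
  tendsto_axial : ∀ ψ ∈ Ioo 0 m, Tendsto (fun x => a (x, ψ)) atBot (𝓝 (V ψ))
  tendsto_cross : ∀ ψ ∈ Ioo 0 m, Tendsto (fun x => b (x, ψ)) atBot (𝓝 0)

theorem hasDerivAt_pd1 {φ : ℝ × ℝ → ℝ} {x t : ℝ} (hφ : DifferentiableAt ℝ φ (x, t)) :
    HasDerivAt (fun x => φ (x, t)) (pd1 φ (x, t)) x :=
  hφ.hasFDerivAt.comp_hasDerivAt x ((hasDerivAt_id x).prodMk (hasDerivAt_const x t))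

theorem continuous_horizontal_section {φ : ℝ × ℝ → ℝ} {I : Set ℝ}
    (hφ : ∀ w : ℝ × ℝ, w.2 ∈ I → DifferentiableAt ℝ φ w) {t : ℝ} (ht : t ∈ I) :
    Continuous fun x => φ (x, t) :=
  continuous_iff_continuousAt.2 fun x => (hasDerivAt_pd1 (hφ (x, t) ht)).continuousAt

theorem continuousOn_vertical_section {φ : ℝ × ℝ → ℝ} {I : Set ℝ}
    (hφ : ContinuousOn φ (Prod.snd ⁻¹' I)) (x : ℝ) : ContinuousOn (fun t => φ (x, t)) I :=
  hφ.comp (by fun_prop) fun _ ht => ht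

namespace IsStreamFlow

variable {m M : ℝ} {V : ℝ → ℝ} {y a b P y' a' b' P' : ℝ × ℝ → ℝ}

theorem head_eq (F : IsStreamFlow m M V y a b P) {ψ : ℝ} (hψ : ψ ∈ Ioo 0 m) (x x' : ℝ) :
    P (x, ψ) + (a (x, ψ) ^ 2 + b (x, ψ) ^ 2) / 2 =
      P (x', ψ) + (a (x', ψ) ^ 2 + b (x', ψ) ^ 2) / 2 := by
  have hderiv (z : ℝ) :
      HasDerivAt (fun z => P (z, ψ) + (a (z, ψ) ^ 2 + b (z, ψ) ^ 2) / 2) 0 z := by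
    have ha := hasDerivAt_pd1 (F.differentiableAt_axial (z, ψ) hψ)
    have hb := hasDerivAt_pd1 (F.differentiableAt_cross (z, ψ) hψ)
    have hP := hasDerivAt_pd1 (F.differentiableAt_pressure (z, ψ) hψ)
    refine (hP.add (((ha.pow 2).add (hb.pow 2)).div_const 2)).congr_deriv ?_
    linear_combination F.bernoulli (z, ψ) hψ
  exact is_const_of_deriv_eq_zero (fun z => (hderiv z).differentiableAt)
    (fun z => (hderiv z).deriv) x x'

theorem tendsto_pressure (F : IsStreamFlow m M V y a b P) {ψ : ℝ} (hψ : ψ ∈ Ioo 0 m) :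
    Tendsto (fun x => P (x, ψ)) atBot
      (𝓝 (P (0, ψ) + (a (0, ψ) ^ 2 + b (0, ψ) ^ 2) / 2 - V ψ ^ 2 / 2)) := by
  have hlim := (((F.tendsto_axial ψ hψ).pow 2).add ((F.tendsto_cross ψ hψ).pow 2)).div_const 2
    |>.const_sub (P (0, ψ) + (a (0, ψ) ^ 2 + b (0, ψ) ^ 2) / 2)
  convert hlim using 2 with x
  · linarith [F.head_eq hψ x 0]
  · ring

theorem continuousOn_cross (F : IsStreamFlow m M V y a b P) :
    ContinuousOn b (Prod.snd ⁻¹' Ioo 0 m) :=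
  fun w hw => (F.differentiableAt_cross w hw).continuousAt.continuousWithinAt

theorem tendsto_integral_cross (F : IsStreamFlow m M V y a b P) {s t : ℝ} (hs : s ∈ Ioo 0 m)
    (ht : t ∈ Ioo 0 m) : Tendsto (fun x => ∫ ψ in s..t, b (x, ψ)) atBot (𝓝 0) := by
  have hsub : uIcc s t ⊆ Ioo 0 m := ordConnected_Ioo.uIcc_subset hs ht
  have hmem : ∀ ψ ∈ uIoc s t, ψ ∈ Ioo 0 m := fun ψ hψ => hsub (uIoc_subset_uIcc hψ)
  have key := intervalIntegral.tendsto_integral_filter_of_dominated_convergence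
    (F := fun x ψ => b (x, ψ)) (f := fun _ => 0) (l := atBot) (μ := volume) (a := s) (b := t)
    (fun _ => M)
    (.of_forall fun x => (((continuousOn_vertical_section F.continuousOn_cross x).mono hsub).mono
      uIoc_subset_uIcc).aestronglyMeasurable measurableSet_uIoc)
    (.of_forall fun x => .of_forall fun ψ hψ => F.abs_cross_le (x, ψ) (hmem ψ hψ))
    (by simp) (.of_forall fun ψ hψ => F.tendsto_cross ψ (hmem ψ hψ))
  simpa using key

theorem integral_pressure_sub (F : IsStreamFlow m M V y a b P) (x₀ x₁ : ℝ) {s t : ℝ}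
    (hs : s ∈ Ioo 0 m) (ht : t ∈ Ioo 0 m) :
    (∫ x in x₀..x₁, P (x, t)) - ∫ x in x₀..x₁, P (x, s) =
      (∫ ψ in s..t, b (x₀, ψ)) - ∫ ψ in s..t, b (x₁, ψ) := by
  have key := integral_strip_of_divergence_eq (S := fun _ => 0) ordConnected_Ioo
    F.differentiableAt_cross F.differentiableAt_pressure F.momentum_cross continuousOn_const
    x₀ x₁ hs ht
  simp only [intervalIntegral.integral_zero] at key
  linarith

theorem exists_head_eq (F : IsStreamFlow m M V y a b P) :
    ∃ k, ∀ w : ℝ × ℝ, w.2 ∈ Ioo 0 m → P w + (a w ^ 2 + b w ^ 2) / 2 = k + V w.2 ^ 2 / 2 := by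
  set κ := fun ψ => P (0, ψ) + (a (0, ψ) ^ 2 + b (0, ψ) ^ 2) / 2 - V ψ ^ 2 / 2
  have hconst : ∀ {s t}, s ∈ Ioo 0 m → t ∈ Ioo 0 m → κ t = κ s := fun {s t} hs ht => by
    have hP : ∀ {ψ}, ψ ∈ Ioo 0 m →
        Tendsto (fun x => ∫ z in (x - 1)..x, P (z, ψ)) atBot (𝓝 (κ ψ)) :=
      fun hψ => tendsto_integral_sub_one_atBot
        (continuous_horizontal_section F.differentiableAt_pressure hψ) (F.tendsto_pressure hψ)
    have hshift : Tendsto (fun x : ℝ => x - 1) atBot atBot :=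
      tendsto_atBot_add_const_right _ _ tendsto_id
    have hb := F.tendsto_integral_cross hs ht
    have hlim := (hP ht).sub (hP hs)
    simp only [F.integral_pressure_sub _ _ hs ht] at hlim
    exact sub_eq_zero.1 (tendsto_nhds_unique hlim (by simpa using (hb.comp hshift).sub hb))
  refine ⟨κ (m / 2), fun w hw => ?_⟩
  have hm : m / 2 ∈ Ioo 0 m := ⟨half_pos (hw.1.trans hw.2), half_lt_self (hw.1.trans hw.2)⟩
  rw [hconst hw hm, sub_add_cancel]
  exact F.head_eq hw w.1 0

theorem exists_pressure_sub_eq (F : IsStreamFlow m M V y a b P)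
    (F' : IsStreamFlow m M V y' a' b' P') :
    ∃ k, ∀ w : ℝ × ℝ, w.2 ∈ Ioo 0 m →
      P w - P' w - k = -((a w ^ 2 + b w ^ 2) - (a' w ^ 2 + b' w ^ 2)) / 2 := by
  obtain ⟨c, hc⟩ := F.exists_head_eq
  obtain ⟨c', hc'⟩ := F'.exists_head_eq
  exact ⟨c - c', fun w hw => by linarith [hc w hw, hc' w hw]⟩

end IsStreamFlow

/-! ### The energy of the difference of two flows -/

/-- The energy density of the difference of two flows with velocities `(a, b)` and `(a', b')` in
von Mises coordinates. -/
def energyGap (a b a' b' : ℝ × ℝ → ℝ) (w : ℝ × ℝ) : ℝ :=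
  ((a w - a' w) ^ 2 + (b w - b' w) ^ 2) / 2 * (1 / a w + 1 / a' w)

namespace IsStreamFlow

variable {m M k W : ℝ} {V : ℝ → ℝ} {y a b P y' a' b' P' : ℝ × ℝ → ℝ}

theorem energyGap_nonneg (F : IsStreamFlow m M V y a b P) (F' : IsStreamFlow m M V y' a' b' P')
    {w : ℝ × ℝ} (hw : w.2 ∈ Ioo 0 m) : 0 ≤ energyGap a b a' b' w := by
  have := F.axial_pos w hw
  have := F'.axial_pos w hw
  unfold energyGap
  positivity

theorem sq_add_sq_le_mul_energyGap (F : IsStreamFlow m M V y a b P)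
    (F' : IsStreamFlow m M V y' a' b' P') {w : ℝ × ℝ} (hw : w.2 ∈ Ioo 0 m) :
    (a w - a' w) ^ 2 + (b w - b' w) ^ 2 ≤ M * energyGap a b a' b' w := by
  have ha := F.axial_pos w hw
  have ha' := F'.axial_pos w hw
  have hM : 0 < M := ha.trans_le (F.axial_le w hw)
  calc (a w - a' w) ^ 2 + (b w - b' w) ^ 2
      = M * (((a w - a' w) ^ 2 + (b w - b' w) ^ 2) / 2 * (1 / M + 1 / M)) := by
        field_simp
        ring
    _ ≤ M * energyGap a b a' b' w := by
        unfold energyGap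
        gcongr
        exacts [F.axial_le w hw, F'.axial_le w hw]

theorem continuousOn_energyGap (F : IsStreamFlow m M V y a b P)
    (F' : IsStreamFlow m M V y' a' b' P') :
    ContinuousOn (energyGap a b a' b') (Prod.snd ⁻¹' Ioo 0 m) := by
  intro w hw
  have ha := (F.differentiableAt_axial w hw).continuousAt
  have ha' := (F'.differentiableAt_axial w hw).continuousAt
  have hb := (F.differentiableAt_cross w hw).continuousAt
  have hb' := (F'.differentiableAt_cross w hw).continuousAt
  have hne := (F.axial_pos w hw).ne'
  have hne' := (F'.axial_pos w hw).ne'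
  refine ContinuousAt.continuousWithinAt ?_
  unfold energyGap
  fun_prop (disch := assumption)

-- Since `b_x + P_ψ = 0` for both flows, the derivatives of `b - b'` and `P - P'` cancel.
theorem divergence_eq_energyGap (F : IsStreamFlow m M V y a b P)
    (F' : IsStreamFlow m M V y' a' b' P')
    (hk : ∀ w : ℝ × ℝ, w.2 ∈ Ioo 0 m →
      P w - P' w - k = -((a w ^ 2 + b w ^ 2) - (a' w ^ 2 + b' w ^ 2)) / 2)
    {w : ℝ × ℝ} (hw : w.2 ∈ Ioo 0 m) :
    pd1 (fun z => (b z - b' z) * (y z - y' z)) w +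
      pd2 (fun z => (P z - P' z - k) * (y z - y' z)) w = energyGap a b a' b' w := by
  have dy := (F.hasFDerivAt_height w hw).sub (F'.hasFDerivAt_height w hw)
  have db := (hasFDerivAt_planeForm (F.differentiableAt_cross w hw)).sub
    (hasFDerivAt_planeForm (F'.differentiableAt_cross w hw))
  have dP := ((hasFDerivAt_planeForm (F.differentiableAt_pressure w hw)).sub
    (hasFDerivAt_planeForm (F'.differentiableAt_pressure w hw))).sub_const k
  have hf : pd1 (fun z => (b z - b' z) * (y z - y' z)) w = _ :=
    DFunLike.congr_fun (db.mul dy).fderiv (1, 0)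
  have hg : pd2 (fun z => (P z - P' z - k) * (y z - y' z)) w = _ :=
    DFunLike.congr_fun (dP.mul dy).fderiv (0, 1)
  have hne := (F.axial_pos w hw).ne'
  have hne' := (F'.axial_pos w hw).ne'
  have halg : energyGap a b a' b' w = (b w - b' w) * (b w / a w - b' w / a' w) +
      -((a w ^ 2 + b w ^ 2) - (a' w ^ 2 + b' w ^ 2)) / 2 * (1 / a w - 1 / a' w) := by
    unfold energyGap
    field_simp
    ring
  rw [hf, hg, halg]
  simp only [add_apply, smul_apply, sub_apply, planeForm_apply, smul_eq_mul, Pi.sub_apply, hk w hw]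
  linear_combination (y w - y' w) * (F.momentum_cross w hw - F'.momentum_cross w hw)

theorem integral_energyGap (F : IsStreamFlow m M V y a b P)
    (F' : IsStreamFlow m M V y' a' b' P')
    (hk : ∀ w : ℝ × ℝ, w.2 ∈ Ioo 0 m →
      P w - P' w - k = -((a w ^ 2 + b w ^ 2) - (a' w ^ 2 + b' w ^ 2)) / 2)
    (x₀ x₁ : ℝ) {s t : ℝ} (hs : s ∈ Ioo 0 m) (ht : t ∈ Ioo 0 m) :
    ∫ x in x₀..x₁, ∫ ψ in s..t, energyGap a b a' b' (x, ψ) =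
      (((∫ x in x₀..x₁, (P (x, t) - P' (x, t) - k) * (y (x, t) - y' (x, t))) -
        ∫ x in x₀..x₁, (P (x, s) - P' (x, s) - k) * (y (x, s) - y' (x, s))) +
        ∫ ψ in s..t, (b (x₁, ψ) - b' (x₁, ψ)) * (y (x₁, ψ) - y' (x₁, ψ))) -
        ∫ ψ in s..t, (b (x₀, ψ) - b' (x₀, ψ)) * (y (x₀, ψ) - y' (x₀, ψ)) := by
  have dy : ∀ w : ℝ × ℝ, w.2 ∈ Ioo 0 m → DifferentiableAt ℝ (fun z => y z - y' z) w := fun w hw =>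
    (F.hasFDerivAt_height w hw).differentiableAt.sub (F'.hasFDerivAt_height w hw).differentiableAt
  exact integral_strip_of_divergence_eq
    (f := fun w => (b w - b' w) * (y w - y' w)) (g := fun w => (P w - P' w - k) * (y w - y' w))
    ordConnected_Ioo
    (fun w hw => ((F.differentiableAt_cross w hw).sub (F'.differentiableAt_cross w hw)).mul
      (dy w hw))
    (fun w hw => (((F.differentiableAt_pressure w hw).sub
      (F'.differentiableAt_pressure w hw)).sub_const k).mul (dy w hw))
    (fun w hw => F.divergence_eq_energyGap F' hk hw) (F.continuousOn_energyGap F') x₀ x₁ hs ht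

theorem abs_pressure_sub_le (F : IsStreamFlow m M V y a b P)
    (F' : IsStreamFlow m M V y' a' b' P')
    (hk : ∀ w : ℝ × ℝ, w.2 ∈ Ioo 0 m →
      P w - P' w - k = -((a w ^ 2 + b w ^ 2) - (a' w ^ 2 + b' w ^ 2)) / 2)
    {w : ℝ × ℝ} (hw : w.2 ∈ Ioo 0 m) : |P w - P' w - k| ≤ M ^ 2 := by
  have ha : a w ^ 2 ≤ M ^ 2 := pow_le_pow_left₀ (F.axial_pos w hw).le (F.axial_le w hw) 2
  have ha' : a' w ^ 2 ≤ M ^ 2 := pow_le_pow_left₀ (F'.axial_pos w hw).le (F'.axial_le w hw) 2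
  have hb : b w ^ 2 ≤ M ^ 2 := sq_le_sq' (neg_le_of_abs_le (F.abs_cross_le w hw))
    (le_of_abs_le (F.abs_cross_le w hw))
  have hb' : b' w ^ 2 ≤ M ^ 2 := sq_le_sq' (neg_le_of_abs_le (F'.abs_cross_le w hw))
    (le_of_abs_le (F'.abs_cross_le w hw))
  rw [hk w hw, abs_le]
  constructor <;> linarith [sq_nonneg (a w), sq_nonneg (a' w), sq_nonneg (b w), sq_nonneg (b' w)]

theorem abs_integral_wall_flux_le (F : IsStreamFlow m M V y a b P)
    (F' : IsStreamFlow m M V y' a' b' P')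
    (hk : ∀ w : ℝ × ℝ, w.2 ∈ Ioo 0 m →
      P w - P' w - k = -((a w ^ 2 + b w ^ 2) - (a' w ^ 2 + b' w ^ 2)) / 2)
    {x₀ x₁ t : ℝ} (hx : x₀ ≤ x₁) (ht : t ∈ Ioo 0 m) :
    |∫ x in x₀..x₁, (P (x, t) - P' (x, t) - k) * (y (x, t) - y' (x, t))| ≤
      M ^ 2 * ∫ x in x₀..x₁, |y (x, t) - y' (x, t)| := by
  have hy := F.continuous_height
  have hy' := F'.continuous_height
  have hpoint (x : ℝ) : ‖(P (x, t) - P' (x, t) - k) * (y (x, t) - y' (x, t))‖ ≤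
      M ^ 2 * |y (x, t) - y' (x, t)| := by
    rw [norm_mul]
    exact mul_le_mul_of_nonneg_right (F.abs_pressure_sub_le F' hk (w := (x, t)) ht) (norm_nonneg _)
  have hcont : Continuous fun x => M ^ 2 * |y (x, t) - y' (x, t)| := by fun_prop
  have hbound := intervalIntegral.norm_integral_le_of_norm_le hx (.of_forall fun x _ => hpoint x)
    (hcont.intervalIntegrable (μ := volume) x₀ x₁)
  rwa [intervalIntegral.integral_const_mul] at hbound

theorem continuousOn_side_flux (F : IsStreamFlow m M V y a b P)
    (F' : IsStreamFlow m M V y' a' b' P') (x : ℝ) :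
    ContinuousOn (fun ψ => (b (x, ψ) - b' (x, ψ)) * (y (x, ψ) - y' (x, ψ))) (Ioo 0 m) := by
  have hy := F.continuous_height
  have hy' := F'.continuous_height
  exact ((continuousOn_vertical_section F.continuousOn_cross x).sub
    (continuousOn_vertical_section F'.continuousOn_cross x)).mul (by fun_prop)

theorem abs_integral_side_flux_le (F : IsStreamFlow m M V y a b P)
    (F' : IsStreamFlow m M V y' a' b' P')
    (hW : ∀ w : ℝ × ℝ, w.2 ∈ Ioo 0 m → |y w - y' w| ≤ W) (x : ℝ) {s t : ℝ} (hs : s ∈ Ioo 0 m)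
    (ht : t ∈ Ioo 0 m) :
    |∫ ψ in s..t, (b (x, ψ) - b' (x, ψ)) * (y (x, ψ) - y' (x, ψ))| ≤ 2 * M * W * |t - s| := by
  have hpoint : ∀ ψ ∈ uIoc s t, ‖(b (x, ψ) - b' (x, ψ)) * (y (x, ψ) - y' (x, ψ))‖ ≤ 2 * M * W := by
    intro ψ hψ
    have hw : ((x, ψ) : ℝ × ℝ).2 ∈ Ioo 0 m :=
      ordConnected_Ioo.uIcc_subset hs ht (uIoc_subset_uIcc hψ)
    have hb : |b (x, ψ) - b' (x, ψ)| ≤ 2 * M := by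
      linarith [abs_sub (b (x, ψ)) (b' (x, ψ)), F.abs_cross_le _ hw, F'.abs_cross_le _ hw]
    rw [norm_mul, Real.norm_eq_abs, Real.norm_eq_abs]
    exact mul_le_mul hb (hW _ hw) (abs_nonneg _) ((abs_nonneg _).trans hb)
  exact intervalIntegral.norm_integral_le_of_norm_le_const hpoint

theorem sq_integral_side_flux_le (F : IsStreamFlow m M V y a b P)
    (F' : IsStreamFlow m M V y' a' b' P')
    (hW : ∀ w : ℝ × ℝ, w.2 ∈ Ioo 0 m → |y w - y' w| ≤ W) (x : ℝ) {s t : ℝ} (hs : s ∈ Ioo 0 m)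
    (ht : t ∈ Ioo 0 m) (hst : s ≤ t) :
    (∫ ψ in s..t, (b (x, ψ) - b' (x, ψ)) * (y (x, ψ) - y' (x, ψ))) ^ 2 ≤
      (t - s) * (W ^ 2 * M) * ∫ ψ in s..t, energyGap a b a' b' (x, ψ) := by
  have hsub : Icc s t ⊆ Ioo 0 m := Icc_subset_Ioo hs.1 ht.2
  have hflux := (F.continuousOn_side_flux F' x).mono hsub
  have hgap := (continuousOn_vertical_section (F.continuousOn_energyGap F') x).mono hsub
  have hpoint : ∀ ψ ∈ Icc s t, ((b (x, ψ) - b' (x, ψ)) * (y (x, ψ) - y' (x, ψ))) ^ 2 ≤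
      W ^ 2 * M * energyGap a b a' b' (x, ψ) := fun ψ hψ => by
    have hw : ((x, ψ) : ℝ × ℝ).2 ∈ Ioo 0 m := hsub hψ
    have hy : (y (x, ψ) - y' (x, ψ)) ^ 2 ≤ W ^ 2 :=
      sq_le_sq' (neg_le_of_abs_le (hW _ hw)) (le_of_abs_le (hW _ hw))
    have hb : (b (x, ψ) - b' (x, ψ)) ^ 2 ≤ M * energyGap a b a' b' (x, ψ) :=
      le_of_add_le_of_nonneg_right (F.sq_add_sq_le_mul_energyGap F' hw) (sq_nonneg _)
    rw [mul_pow, mul_comm, mul_assoc]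
    exact mul_le_mul hy hb (sq_nonneg _) (sq_nonneg _)
  rw [mul_assoc, ← intervalIntegral.integral_const_mul]
  refine (sq_integral_le hst hflux).trans
    (mul_le_mul_of_nonneg_left (intervalIntegral.integral_mono_on hst ?_ ?_ hpoint)
      (sub_nonneg.2 hst)) <;>
  · refine ContinuousOn.intervalIntegrable ?_
    rw [uIcc_of_le hst]
    fun_prop

theorem eventually_wall_flux_le (F : IsStreamFlow m M V y a b P)
    (F' : IsStreamFlow m M V y' a' b' P') (hbot : ∀ x, y (x, 0) = y' (x, 0))
    (htop : ∀ x, y (x, m) = y' (x, m)) (x₀ x₁ : ℝ) {η : ℝ} (hη : 0 < η) :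
    ∀ᶠ δ in 𝓝 0, M ^ 2 * (∫ x in x₀..x₁, |y (x, m - δ) - y' (x, m - δ)|) +
      M ^ 2 * (∫ x in x₀..x₁, |y (x, δ) - y' (x, δ)|) < η := by
  have hy := F.continuous_height
  have hy' := F'.continuous_height
  have hcont : Continuous fun t => ∫ x in x₀..x₁, |y (x, t) - y' (x, t)| :=
    intervalIntegral.continuous_parametric_intervalIntegral_of_continuous'
      (f := fun t x => |y (x, t) - y' (x, t)|) (by fun_prop) x₀ x₁
  have hlim : Continuous fun δ => M ^ 2 * (∫ x in x₀..x₁, |y (x, m - δ) - y' (x, m - δ)|) +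
      M ^ 2 * (∫ x in x₀..x₁, |y (x, δ) - y' (x, δ)|) :=
    ((hcont.comp (continuous_sub_left m)).const_mul _).add (hcont.const_mul _)
  refine (hlim.tendsto 0).eventually_lt_const ?_
  simpa [hbot, htop] using hη

theorem integral_energyGap_le (F : IsStreamFlow m M V y a b P)
    (F' : IsStreamFlow m M V y' a' b' P')
    (hk : ∀ w : ℝ × ℝ, w.2 ∈ Ioo 0 m →
      P w - P' w - k = -((a w ^ 2 + b w ^ 2) - (a' w ^ 2 + b' w ^ 2)) / 2)
    {X X₁ s t : ℝ} (hX : 0 ≤ X) (hX₁ : X ≤ X₁) (hs : s ∈ Ioo 0 m) (ht : t ∈ Ioo 0 m) :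
    ∫ x in (-X)..X, ∫ ψ in s..t, energyGap a b a' b' (x, ψ) ≤
      M ^ 2 * (∫ x in (-X₁)..X₁, |y (x, t) - y' (x, t)|) +
        M ^ 2 * (∫ x in (-X₁)..X₁, |y (x, s) - y' (x, s)|) +
        |∫ ψ in s..t, (b (X, ψ) - b' (X, ψ)) * (y (X, ψ) - y' (X, ψ))| +
        |∫ ψ in s..t, (b (-X, ψ) - b' (-X, ψ)) * (y (-X, ψ) - y' (-X, ψ))| := by
  have hy := F.continuous_height
  have hy' := F'.continuous_height
  have hwall : ∀ {r}, r ∈ Ioo 0 m →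
      |∫ x in (-X)..X, (P (x, r) - P' (x, r) - k) * (y (x, r) - y' (x, r))| ≤
        M ^ 2 * ∫ x in (-X₁)..X₁, |y (x, r) - y' (x, r)| := fun {r} hr => by
    have hcont : Continuous fun x => |y (x, r) - y' (x, r)| := by fun_prop
    refine (F.abs_integral_wall_flux_le F' hk (by linarith) hr).trans
      (mul_le_mul_of_nonneg_left ?_ (sq_nonneg M))
    exact intervalIntegral.integral_mono_interval (by linarith) (by linarith) hX₁
      (.of_forall fun x => abs_nonneg _) (hcont.intervalIntegrable _ _)
  rw [F.integral_energyGap F' hk (-X) X hs ht]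
  refine (sub_le_sub (add_le_add (sub_le_sub (le_of_abs_le (hwall ht))
    (neg_le_of_abs_le (hwall hs))) (le_abs_self _)) (neg_abs_le _)).trans_eq ?_
  ring

theorem integral_energyGap_nonneg (F : IsStreamFlow m M V y a b P)
    (F' : IsStreamFlow m M V y' a' b' P') (x : ℝ) {s t : ℝ} (hs : s ∈ Ioo 0 m)
    (ht : t ∈ Ioo 0 m) (hst : s ≤ t) : 0 ≤ ∫ ψ in s..t, energyGap a b a' b' (x, ψ) :=
  intervalIntegral.integral_nonneg hst fun _ hψ =>
    F.energyGap_nonneg F' (Icc_subset_Ioo hs.1 ht.2 hψ)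

theorem integral_energyGap_mono (F : IsStreamFlow m M V y a b P)
    (F' : IsStreamFlow m M V y' a' b' P') (x : ℝ) {s t s' t' : ℝ} (hs : s ∈ Ioo 0 m)
    (ht : t ∈ Ioo 0 m) (hss' : s ≤ s') (hst' : s' ≤ t') (htt' : t' ≤ t) :
    ∫ ψ in s'..t', energyGap a b a' b' (x, ψ) ≤ ∫ ψ in s..t, energyGap a b a' b' (x, ψ) := by
  have hsub : Icc s t ⊆ Ioo 0 m := Icc_subset_Ioo hs.1 ht.2
  have hst : s ≤ t := hss'.trans (hst'.trans htt')
  refine intervalIntegral.integral_mono_interval hss' hst' htt' ?_ ?_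
  · exact (ae_restrict_iff' measurableSet_Ioc).2 <| .of_forall fun ψ hψ =>
      F.energyGap_nonneg F' (hsub (Ioc_subset_Icc_self hψ))
  · refine ContinuousOn.intervalIntegrable ?_
    rw [uIcc_of_le hst]
    exact (continuousOn_vertical_section (F.continuousOn_energyGap F') x).mono hsub

theorem continuous_integral_energyGap (F : IsStreamFlow m M V y a b P)
    (F' : IsStreamFlow m M V y' a' b' P') {s t : ℝ} (hs : s ∈ Ioo 0 m) (ht : t ∈ Ioo 0 m)
    (hst : s ≤ t) : Continuous fun x => ∫ ψ in s..t, energyGap a b a' b' (x, ψ) :=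
  continuous_integral_of_continuousOn_strip ordConnected_Ioo (F.continuousOn_energyGap F') hs ht
    hst

theorem exists_le_integral_energyGap (F : IsStreamFlow m M V y a b P)
    (F' : IsStreamFlow m M V y' a' b' P') {w : ℝ × ℝ} (hw : w.2 ∈ Ioo 0 m)
    (hpos : 0 < energyGap a b a' b' w) :
    ∃ c > 0, ∃ X ≥ 0, ∃ δ₁ ∈ Ioo 0 (m / 2), ∀ δ ∈ Ioo 0 δ₁,
      c ≤ ∫ x in (-X)..X, ∫ ψ in δ..(m - δ), energyGap a b a' b' (x, ψ) := by
  obtain ⟨δ₁, hδ₁, hδ₁w, hδ₁m⟩ : ∃ δ₁ > 0, δ₁ < w.2 ∧ w.2 < m - δ₁ := by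
    obtain ⟨d, hd, hd'⟩ := exists_between (lt_min hw.1 (sub_pos.2 hw.2))
    exact ⟨d, hd, (lt_min_iff.1 hd').1, lt_sub_comm.1 (lt_min_iff.1 hd').2⟩
  have hs : δ₁ ∈ Ioo 0 m := ⟨hδ₁, hδ₁w.trans hw.2⟩
  have ht : m - δ₁ ∈ Ioo 0 m := ⟨hw.1.trans hδ₁m, sub_lt_self m hδ₁⟩
  have hst : δ₁ < m - δ₁ := hδ₁w.trans hδ₁m
  have hX : -(|w.1| + 1) < |w.1| + 1 := by linarith [abs_nonneg w.1]
  have hslice := F.continuous_integral_energyGap F' hs ht hst.le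
  have hw_slice : 0 < ∫ ψ in δ₁..(m - δ₁), energyGap a b a' b' (w.1, ψ) :=
    intervalIntegral.integral_pos hst
      ((continuousOn_vertical_section (F.continuousOn_energyGap F') w.1).mono
        (Icc_subset_Ioo hs.1 ht.2))
      (fun ψ hψ => F.energyGap_nonneg F' (Icc_subset_Ioo hs.1 ht.2 (Ioc_subset_Icc_self hψ)))
      ⟨w.2, ⟨hδ₁w.le, hδ₁m.le⟩, hpos⟩
  refine ⟨_, intervalIntegral.integral_pos hX hslice.continuousOn
    (fun x _ => F.integral_energyGap_nonneg F' x hs ht hst.le)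
    ⟨w.1, ⟨by linarith [neg_abs_le w.1], by linarith [le_abs_self w.1]⟩, hw_slice⟩,
    |w.1| + 1, by positivity, δ₁, ⟨hδ₁, by linarith⟩, fun δ hδ => ?_⟩
  have hs' : δ ∈ Ioo 0 m := ⟨hδ.1, hδ.2.trans hs.2⟩
  have ht' : m - δ ∈ Ioo 0 m := ⟨by linarith [ht.1, hδ.2], sub_lt_self m hδ.1⟩
  exact intervalIntegral.integral_mono_on hX.le (hslice.intervalIntegrable _ _)
    ((F.continuous_integral_energyGap F' hs' ht' (by linarith [hδ.2])).intervalIntegrable _ _)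
    fun x _ => F.integral_energyGap_mono F' x hs' ht' hδ.2.le hst.le (by linarith [hδ.2])

theorem energyGap_eq_zero (F : IsStreamFlow m M V y a b P) (F' : IsStreamFlow m M V y' a' b' P')
    (hbot : ∀ x, y (x, 0) = y' (x, 0)) (htop : ∀ x, y (x, m) = y' (x, m))
    (hW : ∀ w : ℝ × ℝ, w.2 ∈ Ioo 0 m → |y w - y' w| ≤ W) {w : ℝ × ℝ} (hw : w.2 ∈ Ioo 0 m) :
    energyGap a b a' b' w = 0 := by
  by_contra hne
  obtain ⟨c, hc, X₀, hX₀, δ₁, hδ₁, hlow⟩ :=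
    F.exists_le_integral_energyGap F' hw ((F.energyGap_nonneg F' hw).lt_of_ne' hne)
  obtain ⟨k, hk⟩ := F.exists_pressure_sub_eq F'
  have hm : 0 < m := hw.1.trans hw.2
  have hM : 0 < M := (F.axial_pos w hw).trans_le (F.axial_le w hw)
  have hW₀ : 0 ≤ W := (abs_nonneg _).trans (hW w hw)
  set C := m * (W ^ 2 * M)
  set N := 2 * M * W * m
  set K := 8 * C * (c / 2 + 2 * N)
  obtain ⟨X₁, hX₀₁, hX₁⟩ : ∃ X₁ ≥ X₀, K < c ^ 2 * (X₁ - X₀) := by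
    refine ⟨X₀ + (K + 1) / c ^ 2, le_add_of_nonneg_right (by positivity), ?_⟩
    rw [add_sub_cancel_left, mul_div_cancel₀ _ (pow_pos hc 2).ne']
    exact lt_add_one K
  obtain ⟨δ, hwall, hδ⟩ : ∃ δ, _ ∧ δ ∈ Ioo 0 δ₁ :=
    (((F.eventually_wall_flux_le F' hbot htop (-X₁) X₁ (half_pos hc)).filter_mono
      nhdsWithin_le_nhds).and (Ioo_mem_nhdsGT hδ₁.1)).exists
  have hst : δ ≤ m - δ := by linarith [hδ.2, hδ₁.2]
  have hs : δ ∈ Ioo 0 m := ⟨hδ.1, by linarith [hδ.1]⟩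
  have ht : m - δ ∈ Ioo 0 m := ⟨by linarith [hδ.1], by linarith [hδ.1]⟩
  have hlen : m - δ - δ ≤ m := by linarith [hδ.1]
  have henergy (x : ℝ) := F.integral_energyGap_nonneg F' x hs ht hst
  refine hX₁.not_ge (sq_mul_sub_le_of_energy_le_flux
    (j := fun x => ∫ ψ in δ..(m - δ), (b (x, ψ) - b' (x, ψ)) * (y (x, ψ) - y' (x, ψ)))
    (F.continuous_integral_energyGap F' hs ht hst) henergy (by positivity) hc.le (fun x => ?_)
    (fun x => ?_) hX₀ hX₀₁ (hlow δ hδ) fun X hX => ?_)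
  · exact (F.sq_integral_side_flux_le F' hW x hs ht hst).trans
      (mul_le_mul_of_nonneg_right (mul_le_mul_of_nonneg_right hlen (by positivity)) (henergy x))
  · refine (F.abs_integral_side_flux_le F' hW x hs ht).trans
      (mul_le_mul_of_nonneg_left ?_ (by positivity))
    rwa [abs_of_nonneg (sub_nonneg.2 hst)]
  · linarith [F.integral_energyGap_le F' hk (hX₀.trans hX.1) hX.2 hs ht]

theorem velocity_eq (F : IsStreamFlow m M V y a b P) (F' : IsStreamFlow m M V y' a' b' P')
    (hbot : ∀ x, y (x, 0) = y' (x, 0)) (htop : ∀ x, y (x, m) = y' (x, m))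
    (hW : ∀ w : ℝ × ℝ, w.2 ∈ Ioo 0 m → |y w - y' w| ≤ W) {w : ℝ × ℝ} (hw : w.2 ∈ Ioo 0 m) :
    a w = a' w ∧ b w = b' w := by
  have hle := F.sq_add_sq_le_mul_energyGap F' hw
  rw [F.energyGap_eq_zero F' hbot htop hW hw, mul_zero] at hle
  constructor <;> nlinarith [sq_nonneg (a w - a' w), sq_nonneg (b w - b' w)]

theorem height_eq (F : IsStreamFlow m M V y a b P) (F' : IsStreamFlow m M V y' a' b' P')
    (hbot : ∀ x, y (x, 0) = y' (x, 0)) (htop : ∀ x, y (x, m) = y' (x, m))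
    (hW : ∀ w : ℝ × ℝ, w.2 ∈ Ioo 0 m → |y w - y' w| ≤ W) {w : ℝ × ℝ} (hw : w.2 ∈ Ioo 0 m) :
    y w = y' w := by
  have hy := F.continuous_height
  have hy' := F'.continuous_height
  have hderiv : ∀ t ∈ Ioo 0 w.2, HasDerivAt (fun t => y (w.1, t) - y' (w.1, t)) 0 t := by
    intro t ht
    have htm : t ∈ Ioo 0 m := ⟨ht.1, ht.2.trans hw.2⟩
    have hline : HasDerivAt (fun t => (w.1, t)) ((0 : ℝ), (1 : ℝ)) t :=
      (hasDerivAt_const t w.1).prodMk (hasDerivAt_id t)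
    refine (((F.hasFDerivAt_height (w.1, t) htm).comp_hasDerivAt t hline).sub
      ((F'.hasFDerivAt_height (w.1, t) htm).comp_hasDerivAt t hline)).congr_deriv ?_
    simp [(F.velocity_eq F' hbot htop hW (w := (w.1, t)) htm).1]
  obtain ⟨t, -, hslope⟩ := exists_hasDerivAt_eq_slope (fun t => y (w.1, t) - y' (w.1, t)) _ hw.1
    (by fun_prop) hderiv
  rw [hbot, sub_self, sub_zero, sub_zero, eq_comm, div_eq_zero_iff] at hslope
  exact sub_eq_zero.1 (hslope.resolve_right hw.1.ne')

end IsStreamFlow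

/-! ### Nozzles and flattened coordinates -/

theorem hasFDerivAt_comp_fst {f : ℝ → ℝ} {f' : ℝ} {w : ℝ × ℝ} (hf : HasDerivAt f f' w.1) :
    HasFDerivAt (fun z : ℝ × ℝ => f z.1) (planeForm f' 0) w := by
  refine (hf.comp_hasFDerivAt w hasFDerivAt_fst).congr_fderiv ?_
  ext <;> simp

theorem hasFDerivAt_comp_height {φ y : ℝ × ℝ → ℝ} {w : ℝ × ℝ} {α β : ℝ}
    (hφ : DifferentiableAt ℝ φ (w.1, y w)) (hy : HasFDerivAt y (planeForm α β) w) :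
    HasFDerivAt (fun z : ℝ × ℝ => φ (z.1, y z))
      (planeForm (pd1 φ (w.1, y w) + pd2 φ (w.1, y w) * α) (pd2 φ (w.1, y w) * β)) w := by
  refine (HasFDerivAt.comp (f := fun z : ℝ × ℝ => (z.1, y z)) w (hasFDerivAt_planeForm hφ)
    (hasFDerivAt_fst.prodMk hy)).congr_fderiv ?_
  ext <;> simp

/-- The open region between the graphs of `h₀` and `h₁`. -/
def nozzle (h₀ h₁ : ℝ → ℝ) : Set (ℝ × ℝ) := {x | h₀ x.1 < x.2 ∧ x.2 < h₁ x.1}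

/-- The height of the point over `w.1` which divides the distance between the graphs of `h₀` and
`h₁` in the ratio `w.2`; this maps the strip `ℝ × (0, 1)` to the nozzle. -/
def nozzleHeight (h₀ h₁ : ℝ → ℝ) (w : ℝ × ℝ) : ℝ := h₀ w.1 + w.2 * (h₁ w.1 - h₀ w.1)

/-- An infinite nozzle between the graphs of `h₀` and `h₁`, whose width is bounded and bounded away
from zero, whose lower wall has bounded slope, and which is the strip `0 < x₂ < 1` upstream. -/
structure IsNozzle (h₀ h₁ : ℝ → ℝ) : Prop where
  contDiff_bottom : ContDiff ℝ 2 h₀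
  contDiff_top : ContDiff ℝ 2 h₁
  exists_le_width : ∃ c > 0, ∀ x, c ≤ h₁ x - h₀ x
  bddAbove_width : BddAbove (range fun x => h₁ x - h₀ x)
  bddAbove_slope : BddAbove (range fun x => |deriv h₀ x|)
  upstream : ∃ L, ∀ x ≤ L, h₀ x = 0 ∧ h₁ x = 1

section Geometry

variable {h₀ h₁ : ℝ → ℝ} {x s : ℝ}

theorem isNozzle_of_eq_const {L R l₀ l₁ : ℝ} (hh₀ : ContDiff ℝ 2 h₀) (hh₁ : ContDiff ℝ 2 h₁)
    (hlt : ∀ x, h₀ x < h₁ x) (hup : ∀ x ≤ L, h₀ x = 0 ∧ h₁ x = 1)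
    (hdown : ∀ x ≥ R, h₀ x = l₀ ∧ h₁ x = l₁) : IsNozzle h₀ h₁ := by
  have hwidth : Continuous fun x => h₁ x - h₀ x := hh₁.continuous.sub hh₀.continuous
  have hwidth_pos (x : ℝ) : 0 < h₁ x - h₀ x := sub_pos.2 (hlt x)
  refine ⟨hh₀, hh₁, ?_, ?_, ?_, L, hup⟩
  · obtain ⟨B, hB⟩ := bddAbove_range_of_eq_const (L := L) (R := R) (l := 1) (r := (l₁ - l₀)⁻¹)
      (hwidth.inv₀ fun x => (hwidth_pos x).ne') (fun x hx => by simp [hup x hx])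
      (fun x hx => by simp [hdown x hx])
    have hinv (x : ℝ) : (h₁ x - h₀ x)⁻¹ ≤ B := hB (mem_range_self x)
    have hB₀ : 0 < B := (inv_pos.2 (hwidth_pos 0)).trans_le (hinv 0)
    exact ⟨B⁻¹, inv_pos.2 hB₀, fun x => inv_le_of_inv_le₀ (hwidth_pos x) (hinv x)⟩
  · exact bddAbove_range_of_eq_const (L := L) (R := R) (l := 1) (r := l₁ - l₀) hwidth
      (fun x hx => by simp [hup x hx]) (fun x hx => by simp [hdown x hx])
  · have hleft : EqOn h₀ (fun _ => 0) (Iio L) := fun x hx => (hup x (le_of_lt hx)).1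
    have hright : EqOn h₀ (fun _ => l₀) (Ioi R) := fun x hx => (hdown x (le_of_lt hx)).1
    refine bddAbove_range_of_eq_const (L := L - 1) (R := R + 1) (l := 0) (r := 0)
      (hh₀.continuous_deriv (by norm_num)).abs (fun x hx => ?_) (fun x hx => ?_)
    · simp [hleft.deriv isOpen_Iio (show x < L by linarith)]
    · simp [hright.deriv isOpen_Ioi (show R < x by linarith)]

theorem nozzleHeight_mem_Icc (hle : h₀ x ≤ h₁ x) (hs : s ∈ Icc (0 : ℝ) 1) :
    nozzleHeight h₀ h₁ (x, s) ∈ Icc (h₀ x) (h₁ x) := by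
  constructor <;> simp only [nozzleHeight] <;> nlinarith [hs.1, hs.2]

theorem nozzleHeight_mem_nozzle (hlt : h₀ x < h₁ x) (hs : s ∈ Ioo (0 : ℝ) 1) :
    (x, nozzleHeight h₀ h₁ (x, s)) ∈ nozzle h₀ h₁ := by
  constructor <;> simp only [nozzleHeight] <;> nlinarith [hs.1, hs.2]

theorem nozzleHeight_mem_closure (hlt : h₀ x < h₁ x) (hs : s ∈ Icc (0 : ℝ) 1) :
    (x, nozzleHeight h₀ h₁ (x, s)) ∈ closure (nozzle h₀ h₁) := by
  rw [← closure_Ioo zero_ne_one] at hs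
  exact map_mem_closure (f := fun t => (x, nozzleHeight h₀ h₁ (x, t)))
    (by simp only [nozzleHeight]; fun_prop) hs fun _ ht => nozzleHeight_mem_nozzle hlt ht

theorem exists_nozzleHeight_eq {z : ℝ × ℝ} (hz : z ∈ nozzle h₀ h₁) :
    ∃ s ∈ Ioo (0 : ℝ) 1, nozzleHeight h₀ h₁ (z.1, s) = z.2 := by
  have hwidth : 0 < h₁ z.1 - h₀ z.1 := sub_pos.2 (hz.1.trans hz.2)
  refine ⟨(z.2 - h₀ z.1) / (h₁ z.1 - h₀ z.1), ⟨div_pos (sub_pos.2 hz.1) hwidth, ?_⟩, ?_⟩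
  · rw [div_lt_one hwidth]
    linarith [hz.2]
  · rw [nozzleHeight, div_mul_cancel₀ _ hwidth.ne', add_sub_cancel]

namespace IsNozzle

theorem lt (hN : IsNozzle h₀ h₁) (x : ℝ) : h₀ x < h₁ x := by
  obtain ⟨c, hc, hwidth⟩ := hN.exists_le_width
  exact sub_pos.1 (hc.trans_le (hwidth x))

theorem isOpen_nozzle (hN : IsNozzle h₀ h₁) : IsOpen (nozzle h₀ h₁) := by
  have h0 := hN.contDiff_bottom.continuous
  have h1 := hN.contDiff_top.continuous
  exact (isOpen_lt (by fun_prop) continuous_snd).inter (isOpen_lt continuous_snd (by fun_prop))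

theorem continuous_nozzleHeight (hN : IsNozzle h₀ h₁) : Continuous (nozzleHeight h₀ h₁) := by
  have h0 := hN.contDiff_bottom.continuous
  have h1 := hN.contDiff_top.continuous
  unfold nozzleHeight
  fun_prop

theorem exists_deriv_eq_zero (hN : IsNozzle h₀ h₁) :
    ∃ L, ∀ x ≤ L, (h₀ x = 0 ∧ h₁ x = 1) ∧ deriv h₀ x = 0 ∧ deriv h₁ x = 0 := by
  obtain ⟨L, hL⟩ := hN.upstream
  have hbot : EqOn h₀ (fun _ => 0) (Iio L) := fun x hx => (hL x (le_of_lt hx)).1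
  have htop : EqOn h₁ (fun _ => 1) (Iio L) := fun x hx => (hL x (le_of_lt hx)).2
  refine ⟨L - 1, fun x hx => ?_⟩
  have hxL : x < L := by linarith
  exact ⟨hL x hxL.le, by simpa using hbot.deriv isOpen_Iio hxL,
    by simpa using htop.deriv isOpen_Iio hxL⟩

theorem hasFDerivAt_nozzleHeight_comp (hN : IsNozzle h₀ h₁) {σ : ℝ × ℝ → ℝ} {w : ℝ × ℝ}
    {α β : ℝ} (hσ : HasFDerivAt σ (planeForm α β) w) :
    HasFDerivAt (fun z : ℝ × ℝ => nozzleHeight h₀ h₁ (z.1, σ z))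
      (planeForm (deriv h₀ w.1 + σ w * (deriv h₁ w.1 - deriv h₀ w.1) + α * (h₁ w.1 - h₀ w.1))
        (β * (h₁ w.1 - h₀ w.1))) w := by
  have d0 := hasFDerivAt_comp_fst (hN.contDiff_bottom.differentiable (by norm_num) w.1).hasDerivAt
  have d1 := hasFDerivAt_comp_fst (hN.contDiff_top.differentiable (by norm_num) w.1).hasDerivAt
  refine (d0.add (hσ.mul (d1.sub d0))).congr_fderiv ?_
  ext <;> simp <;> ring

theorem hasFDerivAt_nozzleHeight (hN : IsNozzle h₀ h₁) (w : ℝ × ℝ) :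
    HasFDerivAt (nozzleHeight h₀ h₁)
      (planeForm (deriv h₀ w.1 + w.2 * (deriv h₁ w.1 - deriv h₀ w.1)) (h₁ w.1 - h₀ w.1)) w := by
  have hsnd : HasFDerivAt (Prod.snd : ℝ × ℝ → ℝ) (planeForm 0 1) w :=
    hasFDerivAt_snd.congr_fderiv (by ext <;> simp)
  simpa using hN.hasFDerivAt_nozzleHeight_comp hsnd

end IsNozzle

end Geometry

/-- The velocity at the point of the nozzle with flattened coordinates `w`. The clamping of `w.2` to
`[0, 1]` makes this continuous on the whole plane. -/
def flatVelocity (h₀ h₁ : ℝ → ℝ) (u : ℝ × ℝ → ℝ × ℝ) (w : ℝ × ℝ) : ℝ × ℝ :=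
  u (w.1, nozzleHeight h₀ h₁ (w.1, projIcc (0 : ℝ) 1 zero_le_one w.2))

/-- First component of the Piola transform of `u` to flattened coordinates. -/
def flatAxial (h₀ h₁ : ℝ → ℝ) (u : ℝ × ℝ → ℝ × ℝ) (w : ℝ × ℝ) : ℝ :=
  (h₁ w.1 - h₀ w.1) * (flatVelocity h₀ h₁ u w).1

/-- Second component of the Piola transform of `u` to flattened coordinates. -/
def flatCross (h₀ h₁ : ℝ → ℝ) (u : ℝ × ℝ → ℝ × ℝ) (w : ℝ × ℝ) : ℝ :=
  (flatVelocity h₀ h₁ u w).2 -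
    (deriv h₀ w.1 + w.2 * (deriv h₁ w.1 - deriv h₀ w.1)) * (flatVelocity h₀ h₁ u w).1

/-- A solution of the Euler system in a nozzle with positive horizontal velocity, whose horizontal
velocity converges upstream to a positive profile `U`. -/
structure IsNozzleFlow (h₀ h₁ U : ℝ → ℝ) (u : ℝ × ℝ → ℝ × ℝ) (p : ℝ × ℝ → ℝ) : Prop where
  isNozzle : IsNozzle h₀ h₁
  euler : IsEulerSlip h₀ h₁ (nozzle h₀ h₁) u p
  velocity_pos : ∀ z ∈ nozzle h₀ h₁, 0 < (u z).1
  profile_pos : ∀ s ∈ Ioo (0 : ℝ) 1, 0 < U s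
  upstream : TendstoUniformlyOn (fun x s => (u (x, s)).1) U atBot (Icc 0 1)

section FlatVelocity

variable {h₀ h₁ : ℝ → ℝ} {u : ℝ × ℝ → ℝ × ℝ} {x s : ℝ}

theorem flatVelocity_of_mem (hs : s ∈ Icc (0 : ℝ) 1) :
    flatVelocity h₀ h₁ u (x, s) = u (x, nozzleHeight h₀ h₁ (x, s)) := by
  simp only [flatVelocity, projIcc_of_mem zero_le_one hs]

theorem flatVelocity_zero : flatVelocity h₀ h₁ u (x, 0) = u (x, h₀ x) := by
  simp [flatVelocity_of_mem (left_mem_Icc.2 zero_le_one), nozzleHeight]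

theorem flatVelocity_one : flatVelocity h₀ h₁ u (x, 1) = u (x, h₁ x) := by
  simp [flatVelocity_of_mem (right_mem_Icc.2 zero_le_one), nozzleHeight]

theorem flatVelocity_eventuallyEq {w : ℝ × ℝ} (hw : w.2 ∈ Ioo (0 : ℝ) 1) :
    flatVelocity h₀ h₁ u =ᶠ[𝓝 w] fun z => u (z.1, nozzleHeight h₀ h₁ z) := by
  filter_upwards [(isOpen_Ioo.preimage continuous_snd).mem_nhds hw] with z hz
  exact flatVelocity_of_mem (Ioo_subset_Icc_self hz)

end FlatVelocity

namespace IsNozzleFlow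

variable {h₀ h₁ U : ℝ → ℝ} {u : ℝ × ℝ → ℝ × ℝ} {p : ℝ × ℝ → ℝ}

theorem differentiableAt_velocity (F : IsNozzleFlow h₀ h₁ U u p) {z : ℝ × ℝ}
    (hz : z ∈ nozzle h₀ h₁) : DifferentiableAt ℝ u z :=
  (F.euler.1.contDiffAt (F.isNozzle.isOpen_nozzle.mem_nhds hz)).differentiableAt (by norm_num)

theorem differentiableAt_pressure (F : IsNozzleFlow h₀ h₁ U u p) {z : ℝ × ℝ}
    (hz : z ∈ nozzle h₀ h₁) : DifferentiableAt ℝ p z :=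
  (F.euler.2.2.1.contDiffAt (F.isNozzle.isOpen_nozzle.mem_nhds hz)).differentiableAt (by norm_num)

theorem continuous_flatVelocity (F : IsNozzleFlow h₀ h₁ U u p) :
    Continuous (flatVelocity h₀ h₁ u) := by
  obtain ⟨K, hK⟩ := F.euler.2.1
  have hheight := F.isNozzle.continuous_nozzleHeight
  have hproj : Continuous fun t : ℝ => (projIcc (0 : ℝ) 1 zero_le_one t : ℝ) :=
    continuous_subtype_val.comp continuous_projIcc
  exact hK.continuousOn.comp_continuous (by fun_prop) fun w =>
    nozzleHeight_mem_closure (F.isNozzle.lt w.1) (Subtype.coe_prop _)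

theorem hasFDerivAt_flatVelocity_fst (F : IsNozzleFlow h₀ h₁ U u p) {w z : ℝ × ℝ}
    (hw : w.2 ∈ Ioo (0 : ℝ) 1) (hz : z = (w.1, nozzleHeight h₀ h₁ w)) :
    HasFDerivAt (fun w => (flatVelocity h₀ h₁ u w).1)
      (planeForm
        (pd1 (fun y => (u y).1) z +
          pd2 (fun y => (u y).1) z * (deriv h₀ w.1 + w.2 * (deriv h₁ w.1 - deriv h₀ w.1)))
        (pd2 (fun y => (u y).1) z * (h₁ w.1 - h₀ w.1))) w := by
  subst hz
  exact (hasFDerivAt_comp_height (F.differentiableAt_velocity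
    (nozzleHeight_mem_nozzle (F.isNozzle.lt w.1) hw)).fst
    (F.isNozzle.hasFDerivAt_nozzleHeight w)).congr_of_eventuallyEq
    ((flatVelocity_eventuallyEq hw).fun_comp Prod.fst)

theorem hasFDerivAt_flatVelocity_snd (F : IsNozzleFlow h₀ h₁ U u p) {w z : ℝ × ℝ}
    (hw : w.2 ∈ Ioo (0 : ℝ) 1) (hz : z = (w.1, nozzleHeight h₀ h₁ w)) :
    HasFDerivAt (fun w => (flatVelocity h₀ h₁ u w).2)
      (planeForm
        (pd1 (fun y => (u y).2) z +
          pd2 (fun y => (u y).2) z * (deriv h₀ w.1 + w.2 * (deriv h₁ w.1 - deriv h₀ w.1)))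
        (pd2 (fun y => (u y).2) z * (h₁ w.1 - h₀ w.1))) w := by
  subst hz
  exact (hasFDerivAt_comp_height (F.differentiableAt_velocity
    (nozzleHeight_mem_nozzle (F.isNozzle.lt w.1) hw)).snd
    (F.isNozzle.hasFDerivAt_nozzleHeight w)).congr_of_eventuallyEq
    ((flatVelocity_eventuallyEq hw).fun_comp Prod.snd)

theorem differentiableAt_flatAxial (F : IsNozzleFlow h₀ h₁ U u p) {w : ℝ × ℝ}
    (hw : w.2 ∈ Ioo (0 : ℝ) 1) : DifferentiableAt ℝ (flatAxial h₀ h₁ u) w := by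
  have h0 := F.isNozzle.contDiff_bottom.differentiable (by norm_num)
  have h1 := F.isNozzle.contDiff_top.differentiable (by norm_num)
  exact ((h1.sub h0).differentiableAt.comp w differentiableAt_fst).mul
    (F.hasFDerivAt_flatVelocity_fst hw rfl).differentiableAt

theorem differentiableAt_flatCross (F : IsNozzleFlow h₀ h₁ U u p) {w : ℝ × ℝ}
    (hw : w.2 ∈ Ioo (0 : ℝ) 1) : DifferentiableAt ℝ (flatCross h₀ h₁ u) w := by
  have h0 := F.isNozzle.contDiff_bottom.differentiable_deriv_two
  have h1 := F.isNozzle.contDiff_top.differentiable_deriv_two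
  have hu₁ := (F.hasFDerivAt_flatVelocity_fst hw rfl).differentiableAt
  have hu₂ := (F.hasFDerivAt_flatVelocity_snd hw rfl).differentiableAt
  unfold flatCross
  fun_prop

theorem pd1_flatAxial (F : IsNozzleFlow h₀ h₁ U u p) {w z : ℝ × ℝ} (hw : w.2 ∈ Ioo (0 : ℝ) 1)
    (hz : z = (w.1, nozzleHeight h₀ h₁ w)) :
    pd1 (flatAxial h₀ h₁ u) w = (deriv h₁ w.1 - deriv h₀ w.1) * (u z).1 +
      (h₁ w.1 - h₀ w.1) * (pd1 (fun y => (u y).1) z +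
        pd2 (fun y => (u y).1) z * (deriv h₀ w.1 + w.2 * (deriv h₁ w.1 - deriv h₀ w.1))) := by
  have dh₀ := hasFDerivAt_comp_fst
    (F.isNozzle.contDiff_bottom.differentiable (by norm_num) w.1).hasDerivAt
  have dh₁ := hasFDerivAt_comp_fst
    (F.isNozzle.contDiff_top.differentiable (by norm_num) w.1).hasDerivAt
  have dA : HasFDerivAt (flatAxial h₀ h₁ u) _ w :=
    (dh₁.sub dh₀).mul (F.hasFDerivAt_flatVelocity_fst hw hz)
  rw [pd1, dA.fderiv, (flatVelocity_eventuallyEq hw).eq_of_nhds, ← hz]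
  simp only [add_apply, smul_apply, sub_apply, planeForm_apply, Pi.sub_apply, smul_eq_mul]
  ring

theorem pd2_flatCross (F : IsNozzleFlow h₀ h₁ U u p) {w z : ℝ × ℝ} (hw : w.2 ∈ Ioo (0 : ℝ) 1)
    (hz : z = (w.1, nozzleHeight h₀ h₁ w)) :
    pd2 (flatCross h₀ h₁ u) w = pd2 (fun y => (u y).2) z * (h₁ w.1 - h₀ w.1) -
      ((deriv h₁ w.1 - deriv h₀ w.1) * (u z).1 +
        (deriv h₀ w.1 + w.2 * (deriv h₁ w.1 - deriv h₀ w.1)) *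
          (pd2 (fun y => (u y).1) z * (h₁ w.1 - h₀ w.1))) := by
  have ddh₀ := hasFDerivAt_comp_fst
    (F.isNozzle.contDiff_bottom.differentiable_deriv_two w.1).hasDerivAt
  have ddh₁ := hasFDerivAt_comp_fst
    (F.isNozzle.contDiff_top.differentiable_deriv_two w.1).hasDerivAt
  have dB : HasFDerivAt (flatCross h₀ h₁ u) _ w :=
    (F.hasFDerivAt_flatVelocity_snd hw hz).sub
      ((ddh₀.add (hasFDerivAt_snd.mul (ddh₁.sub ddh₀))).mul (F.hasFDerivAt_flatVelocity_fst hw hz))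
  rw [pd2, dB.fderiv, (flatVelocity_eventuallyEq hw).eq_of_nhds, ← hz]
  simp only [add_apply, smul_apply, sub_apply, planeForm_apply, Pi.sub_apply, Pi.add_apply,
    Pi.mul_apply, ContinuousLinearMap.coe_snd', smul_eq_mul]
  ring

theorem pd1_flatAxial_add_pd2_flatCross (F : IsNozzleFlow h₀ h₁ U u p) {w : ℝ × ℝ}
    (hw : w.2 ∈ Ioo (0 : ℝ) 1) : pd1 (flatAxial h₀ h₁ u) w + pd2 (flatCross h₀ h₁ u) w = 0 := by
  have hdiv := (F.euler.2.2.2.1 (w.1, nozzleHeight h₀ h₁ w)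
    (nozzleHeight_mem_nozzle (F.isNozzle.lt w.1) hw)).2.2
  rw [F.pd1_flatAxial hw rfl, F.pd2_flatCross hw rfl]
  linear_combination (h₁ w.1 - h₀ w.1) * hdiv

theorem isStripFlow (F : IsNozzleFlow h₀ h₁ U u p) :
    IsStripFlow (flatAxial h₀ h₁ u) (flatCross h₀ h₁ u) where
  continuous_axial := by
    have hvel := F.continuous_flatVelocity
    have h0 := F.isNozzle.contDiff_bottom.continuous
    have h1 := F.isNozzle.contDiff_top.continuous
    unfold flatAxial
    fun_prop
  continuous_cross := by
    have hvel := F.continuous_flatVelocity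
    have h0 := F.isNozzle.contDiff_bottom.continuous_deriv (by norm_num)
    have h1 := F.isNozzle.contDiff_top.continuous_deriv (by norm_num)
    unfold flatCross
    fun_prop
  differentiableAt_axial _ hw := F.differentiableAt_flatAxial hw
  differentiableAt_cross _ hw := F.differentiableAt_flatCross hw
  divergence_eq_zero _ hw := F.pd1_flatAxial_add_pd2_flatCross hw
  tangent_bottom x := by simp [flatCross, flatVelocity_zero, (F.euler.2.2.2.2 x).1]
  tangent_top x := by simp [flatCross, flatVelocity_one, (F.euler.2.2.2.2 x).2]
  pos := by
    rintro ⟨x, s⟩ hs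
    rw [flatAxial, flatVelocity_of_mem (Ioo_subset_Icc_self hs)]
    exact mul_pos (sub_pos.2 (F.isNozzle.lt x))
      (F.velocity_pos _ (nozzleHeight_mem_nozzle (F.isNozzle.lt x) hs))

theorem eventually_flat_eq (F : IsNozzleFlow h₀ h₁ U u p) :
    ∀ᶠ x in atBot, ∀ s ∈ Icc (0 : ℝ) 1, nozzleHeight h₀ h₁ (x, s) = s ∧
      flatAxial h₀ h₁ u (x, s) = (u (x, s)).1 ∧ flatCross h₀ h₁ u (x, s) = (u (x, s)).2 := by
  obtain ⟨L, hL⟩ := F.isNozzle.exists_deriv_eq_zero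
  filter_upwards [eventually_le_atBot L] with x hx s hs
  obtain ⟨⟨h0, h1⟩, dh0, dh1⟩ := hL x hx
  have hheight : nozzleHeight h₀ h₁ (x, s) = s := by simp [nozzleHeight, h0, h1]
  simp [flatAxial, flatCross, flatVelocity_of_mem hs, hheight, h0, h1, dh0, dh1]

theorem tendstoUniformlyOn_flatAxial (F : IsNozzleFlow h₀ h₁ U u p) :
    TendstoUniformlyOn (fun x s => flatAxial h₀ h₁ u (x, s)) U atBot (Icc 0 1) :=
  F.upstream.congr (F.eventually_flat_eq.mono fun _ hx s hs => (hx s hs).2.1.symm)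

theorem continuousOn_flatAxial_section (F : IsNozzleFlow h₀ h₁ U u p) (x : ℝ) :
    ContinuousOn (fun s => flatAxial h₀ h₁ u (x, s)) (Icc 0 1) :=
  (F.isStripFlow.continuous_axial.comp (by fun_prop : Continuous fun s => (x, s))).continuousOn

theorem continuousOn_profile (F : IsNozzleFlow h₀ h₁ U u p) : ContinuousOn U (Icc 0 1) :=
  F.tendstoUniformlyOn_flatAxial.continuousOn
    (Frequently.of_forall F.continuousOn_flatAxial_section)

theorem tendsto_streamFn (F : IsNozzleFlow h₀ h₁ U u p) {s : ℝ} (hs : s ∈ Icc (0 : ℝ) 1) :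
    Tendsto (fun x => streamFn (flatAxial h₀ h₁ u) (x, s)) atBot (𝓝 (∫ t in (0 : ℝ)..s, U t)) := by
  have hsub : uIcc 0 s ⊆ Icc 0 1 := uIcc_of_le hs.1 ▸ Icc_subset_Icc_right hs.2
  exact TendstoUniformlyOn.tendsto_intervalIntegral_of_continuousOn
    (.of_forall fun x => (F.continuousOn_flatAxial_section x).mono hsub)
    (F.tendstoUniformlyOn_flatAxial.mono hsub)

theorem streamFn_one (F : IsNozzleFlow h₀ h₁ U u p) (x : ℝ) :
    streamFn (flatAxial h₀ h₁ u) (x, 1) = ∫ t in (0 : ℝ)..1, U t := by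
  refine tendsto_nhds_unique ?_ (F.tendsto_streamFn (right_mem_Icc.2 zero_le_one))
  simp only [F.isStripFlow.streamFn_one_eq x, tendsto_const_nhds]

theorem uniformContinuousOn_cross_upstream (F : IsNozzleFlow h₀ h₁ U u p) {s : ℝ}
    (hs : s ∈ Icc (0 : ℝ) 1) :
    ∃ L, UniformContinuousOn (fun x => flatCross h₀ h₁ u (x, s)) (Iic L) := by
  obtain ⟨L, hL⟩ := eventually_atBot.1 F.eventually_flat_eq
  obtain ⟨K, hK⟩ := F.euler.2.1
  have hmem : ∀ x ∈ Iic L, (x, s) ∈ closure (nozzle h₀ h₁) := fun x hx =>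
    (hL x hx s hs).1 ▸ nozzleHeight_mem_closure (F.isNozzle.lt x) hs
  have hcomp : LipschitzOnWith (1 * (K * 1)) (fun x => (u (x, s)).2) (Iic L) :=
    LipschitzWith.prod_snd.comp_lipschitzOnWith
      (hK.comp (LipschitzWith.prodMk_right s).lipschitzOnWith hmem)
  exact ⟨L, hcomp.uniformContinuousOn.congr fun x hx => (hL x hx s hs).2.2.symm⟩

theorem tendsto_flatCross (F : IsNozzleFlow h₀ h₁ U u p) {s : ℝ} (hs : s ∈ Icc (0 : ℝ) 1) :
    Tendsto (fun x => flatCross h₀ h₁ u (x, s)) atBot (𝓝 0) := by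
  obtain ⟨L, hL⟩ := F.uniformContinuousOn_cross_upstream hs
  simpa using tendsto_deriv_zero_atBot (fun x _ => by
    simpa using (F.isStripFlow.hasDerivAt_streamFn_fst x hs).fun_neg) hL (F.tendsto_streamFn hs).neg

theorem tendsto_velocity_upstream (F : IsNozzleFlow h₀ h₁ U u p) {τ : ℝ → ℝ} {s : ℝ}
    (hτ : ∀ x, τ x ∈ Icc (0 : ℝ) 1) (hs : s ∈ Icc (0 : ℝ) 1) (hlim : Tendsto τ atBot (𝓝 s)) :
    Tendsto (fun x => flatVelocity h₀ h₁ u (x, τ x)) atBot (𝓝 (U s, 0)) := by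
  obtain ⟨K, hK⟩ := F.euler.2.1
  have hfixed : Tendsto (fun x => u (x, s)) atBot (𝓝 (U s, 0)) :=
    (F.upstream.tendsto_at hs).prodMk_nhds ((F.tendsto_flatCross hs).congr'
      (F.eventually_flat_eq.mono fun x hx => (hx s hs).2.2))
  have hshift : Tendsto (fun x => K * |s - τ x|) atBot (𝓝 0) := by
    simpa using (hlim.const_sub s).abs.const_mul (K : ℝ)
  refine hfixed.congr_dist (squeeze_zero' (.of_forall fun _ => dist_nonneg) ?_ hshift)
  filter_upwards [F.eventually_flat_eq] with x hx
  have hmem : ∀ r ∈ Icc (0 : ℝ) 1, (x, r) ∈ closure (nozzle h₀ h₁) := fun r hr =>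
    (hx r hr).1 ▸ nozzleHeight_mem_closure (F.isNozzle.lt x) hr
  rw [flatVelocity_of_mem (hτ x), (hx _ (hτ x)).1]
  simpa [Prod.dist_eq, Real.dist_eq] using hK.dist_le_mul _ (hmem s hs) _ (hmem _ (hτ x))

theorem exists_norm_flatVelocity_sub_le (F : IsNozzleFlow h₀ h₁ U u p) :
    ∃ D, ∀ x, ∀ s ∈ Icc (0 : ℝ) 1, ∀ t ∈ Icc (0 : ℝ) 1,
      ‖flatVelocity h₀ h₁ u (x, s) - flatVelocity h₀ h₁ u (x, t)‖ ≤ D := by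
  obtain ⟨K, hK⟩ := F.euler.2.1
  obtain ⟨W, hW⟩ := F.isNozzle.bddAbove_width
  refine ⟨K * W, fun x s hs t ht => ?_⟩
  have hlt := F.isNozzle.lt x
  rw [flatVelocity_of_mem hs, flatVelocity_of_mem ht, ← dist_eq_norm]
  refine (hK.dist_le_mul _ (nozzleHeight_mem_closure hlt hs) _
    (nozzleHeight_mem_closure hlt ht)).trans ?_
  rw [Prod.dist_eq, dist_self, max_eq_right dist_nonneg]
  gcongr
  exact (Real.dist_le_of_mem_Icc (nozzleHeight_mem_Icc hlt.le hs)
    (nozzleHeight_mem_Icc hlt.le ht)).trans (hW (mem_range_self x))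

theorem exists_flatVelocity_fst_eq (F : IsNozzleFlow h₀ h₁ U u p) (x : ℝ) :
    ∃ s ∈ Icc (0 : ℝ) 1,
      (h₁ x - h₀ x) * (flatVelocity h₀ h₁ u (x, s)).1 = ∫ t in (0 : ℝ)..1, U t := by
  have hcont := F.continuousOn_flatAxial_section x
  rw [← uIcc_of_le zero_le_one] at hcont
  obtain ⟨s, hs, hmean⟩ := exists_eq_interval_average zero_ne_one hcont
  rw [interval_average_eq, sub_zero, inv_one, one_smul] at hmean
  exact ⟨s, uIcc_of_le (zero_le_one' ℝ) ▸ uIoo_subset_uIcc_self hs,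
    hmean.trans (F.streamFn_one x)⟩

theorem exists_norm_flatVelocity_zero_le (F : IsNozzleFlow h₀ h₁ U u p) :
    ∃ M, ∀ x, ‖flatVelocity h₀ h₁ u (x, 0)‖ ≤ M := by
  obtain ⟨D, hD⟩ := F.exists_norm_flatVelocity_sub_le
  obtain ⟨c, hc, hwidth⟩ := F.isNozzle.exists_le_width
  obtain ⟨S, hS⟩ := F.isNozzle.bddAbove_slope
  set m := ∫ t in (0 : ℝ)..1, U t with hm
  refine ⟨max 1 S * (|m| / c + D), fun x => ?_⟩
  obtain ⟨s, hs, hflux⟩ := F.exists_flatVelocity_fst_eq x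
  have hslip : (flatVelocity h₀ h₁ u (x, 0)).2 =
      deriv h₀ x * (flatVelocity h₀ h₁ u (x, 0)).1 :=
    flatVelocity_zero (u := u) ▸ (F.euler.2.2.2.2 x).1
  have hmean : |(flatVelocity h₀ h₁ u (x, s)).1| ≤ |m| / c := by
    rw [le_div_iff₀' hc, hm, ← hflux, abs_mul]
    gcongr
    exact (hwidth x).trans (le_abs_self _)
  have hfst : |(flatVelocity h₀ h₁ u (x, 0)).1| ≤ |m| / c + D := by
    have := (norm_fst_le _).trans (hD x 0 (left_mem_Icc.2 zero_le_one) s hs)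
    rw [Prod.fst_sub, Real.norm_eq_abs] at this
    linarith [abs_sub_abs_le_abs_sub (flatVelocity h₀ h₁ u (x, 0)).1
      (flatVelocity h₀ h₁ u (x, s)).1]
  have hbound : 0 ≤ |m| / c + D := (abs_nonneg _).trans hfst
  refine max_le (hfst.trans (le_mul_of_one_le_left hbound (le_max_left _ _))) ?_
  rw [hslip, norm_mul]
  exact mul_le_mul ((hS (mem_range_self x)).trans (le_max_right _ _)) hfst (norm_nonneg _)
    (by positivity)

theorem exists_norm_velocity_le (F : IsNozzleFlow h₀ h₁ U u p) :
    ∃ M, ∀ z ∈ nozzle h₀ h₁, ‖u z‖ ≤ M := by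
  obtain ⟨D, hD⟩ := F.exists_norm_flatVelocity_sub_le
  obtain ⟨M, hM⟩ := F.exists_norm_flatVelocity_zero_le
  refine ⟨M + D, fun z hz => ?_⟩
  obtain ⟨s, hs, hsz⟩ := exists_nozzleHeight_eq hz
  have hs' := Ioo_subset_Icc_self hs
  have hz' : u z = flatVelocity h₀ h₁ u (z.1, s) := by rw [flatVelocity_of_mem hs', hsz]
  rw [hz']
  linarith [norm_le_norm_add_norm_sub' (flatVelocity h₀ h₁ u (z.1, s))
    (flatVelocity h₀ h₁ u (z.1, 0)), hM z.1, hD z.1 s hs' 0 (left_mem_Icc.2 zero_le_one)]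

end IsNozzleFlow

/-! ### Streamlines in a nozzle -/

/-- The height of the streamlines of the velocity field `u` in the nozzle: at abscissa `w.1`, the
stream function takes the value `w.2` at height `streamHeight h₀ h₁ u w`. -/
def streamHeight (h₀ h₁ : ℝ → ℝ) (u : ℝ × ℝ → ℝ × ℝ) (w : ℝ × ℝ) : ℝ :=
  nozzleHeight h₀ h₁ (w.1, level (flatAxial h₀ h₁ u) w)

/-- The speed, as a function of the stream function, of the parallel flow with profile `U` in
`ℝ × [0, 1]`. -/
def parallelSpeed (U : ℝ → ℝ) (ψ : ℝ) : ℝ := U (invIcc 0 1 (fun s => ∫ t in (0 : ℝ)..s, U t) ψ)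

namespace IsNozzleFlow

variable {h₀ h₁ U : ℝ → ℝ} {u v : ℝ × ℝ → ℝ × ℝ} {p q : ℝ × ℝ → ℝ} {w : ℝ × ℝ}

theorem streamHeight_mem_nozzle (F : IsNozzleFlow h₀ h₁ U u p)
    (hw : w.2 ∈ Ioo 0 (∫ t in (0 : ℝ)..1, U t)) :
    (w.1, streamHeight h₀ h₁ u w) ∈ nozzle h₀ h₁ :=
  nozzleHeight_mem_nozzle (F.isNozzle.lt w.1) (F.isStripFlow.level_mem_Ioo F.streamFn_one hw)

theorem continuous_streamHeight (F : IsNozzleFlow h₀ h₁ U u p) :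
    Continuous (streamHeight h₀ h₁ u) :=
  F.isNozzle.continuous_nozzleHeight.comp (continuous_fst.prodMk F.isStripFlow.continuous_level)

theorem streamHeight_streamFn (F : IsNozzleFlow h₀ h₁ U u p) (x : ℝ) {s : ℝ}
    (hs : s ∈ Icc (0 : ℝ) 1) :
    streamHeight h₀ h₁ u (x, streamFn (flatAxial h₀ h₁ u) (x, s)) =
      nozzleHeight h₀ h₁ (x, s) := by
  rw [streamHeight, F.isStripFlow.level_streamFn x hs]

theorem streamHeight_bottom (F : IsNozzleFlow h₀ h₁ U u p) (x : ℝ) :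
    streamHeight h₀ h₁ u (x, 0) = h₀ x := by
  simpa [nozzleHeight] using F.streamHeight_streamFn x (left_mem_Icc.2 zero_le_one)

theorem streamHeight_top (F : IsNozzleFlow h₀ h₁ U u p) (x : ℝ) :
    streamHeight h₀ h₁ u (x, ∫ t in (0 : ℝ)..1, U t) = h₁ x := by
  simpa [nozzleHeight, F.streamFn_one] using
    F.streamHeight_streamFn x (right_mem_Icc.2 zero_le_one)

theorem exists_streamHeight_eq (F : IsNozzleFlow h₀ h₁ U u p) {z : ℝ × ℝ}
    (hz : z ∈ nozzle h₀ h₁) :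
    ∃ ψ ∈ Ioo 0 (∫ t in (0 : ℝ)..1, U t), streamHeight h₀ h₁ u (z.1, ψ) = z.2 := by
  obtain ⟨s, hs, hsz⟩ := exists_nozzleHeight_eq hz
  have hs' := Ioo_subset_Icc_self hs
  have hmono := F.isStripFlow.strictMonoOn_streamFn z.1
  refine ⟨streamFn (flatAxial h₀ h₁ u) (z.1, s), ⟨?_, ?_⟩, ?_⟩
  · simpa using hmono (left_mem_Icc.2 zero_le_one) hs' hs.1
  · simpa [F.streamFn_one] using hmono hs' (right_mem_Icc.2 zero_le_one) hs.2
  · rw [F.streamHeight_streamFn z.1 hs', hsz]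

theorem hasFDerivAt_streamHeight (F : IsNozzleFlow h₀ h₁ U u p)
    (hw : w.2 ∈ Ioo 0 (∫ t in (0 : ℝ)..1, U t)) :
    HasFDerivAt (streamHeight h₀ h₁ u)
      (planeForm ((u (w.1, streamHeight h₀ h₁ u w)).2 / (u (w.1, streamHeight h₀ h₁ u w)).1)
        (1 / (u (w.1, streamHeight h₀ h₁ u w)).1)) w := by
  have key := F.isNozzle.hasFDerivAt_nozzleHeight_comp
    (F.isStripFlow.hasFDerivAt_level F.streamFn_one hw)
  have hvel : flatVelocity h₀ h₁ u (w.1, level (flatAxial h₀ h₁ u) w) =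
      u (w.1, streamHeight h₀ h₁ u w) := flatVelocity_of_mem (F.isStripFlow.level_mem_Icc w)
  have hpos := (F.velocity_pos _ (F.streamHeight_mem_nozzle hw)).ne'
  have hwidth : h₁ w.1 - h₀ w.1 ≠ 0 := (sub_pos.2 (F.isNozzle.lt w.1)).ne'
  refine key.congr_fderiv ?_
  simp only [flatAxial, flatCross, hvel]
  congr 1 <;> field_simp
  ring

theorem hasFDerivAt_comp_streamHeight (F : IsNozzleFlow h₀ h₁ U u p)
    (hw : w.2 ∈ Ioo 0 (∫ t in (0 : ℝ)..1, U t)) {z : ℝ × ℝ}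
    (hz : z = (w.1, streamHeight h₀ h₁ u w)) {φ : ℝ × ℝ → ℝ} (hφ : DifferentiableAt ℝ φ z) :
    HasFDerivAt (fun w => φ (w.1, streamHeight h₀ h₁ u w))
      (planeForm (pd1 φ z + pd2 φ z * ((u z).2 / (u z).1)) (pd2 φ z * (1 / (u z).1))) w := by
  subst hz
  exact hasFDerivAt_comp_height hφ (F.hasFDerivAt_streamHeight hw)

theorem tendsto_velocity_streamline (F : IsNozzleFlow h₀ h₁ U u p) (ψ : ℝ) :
    Tendsto (fun x => u (x, streamHeight h₀ h₁ u (x, ψ))) atBot (𝓝 (parallelSpeed U ψ, 0)) := by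
  have hcont := F.continuousOn_profile
  have hmono := strictMonoOn_integral_of_pos hcont F.profile_pos
  have hprim : ContinuousOn (fun s => ∫ t in (0 : ℝ)..s, U t) (Icc 0 1) :=
    uIcc_of_le (zero_le_one' ℝ) ▸ intervalIntegral.continuousOn_primitive_interval (μ := volume)
      (uIcc_of_le (zero_le_one' ℝ) ▸ hcont.integrableOn_Icc)
  have hlevel : Tendsto (fun x => level (flatAxial h₀ h₁ u) (x, ψ)) atBot
      (𝓝 (invIcc 0 1 (fun s => ∫ t in (0 : ℝ)..s, U t) ψ)) :=
    tendsto_invIcc zero_le_one F.isStripFlow.continuousOn_streamFn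
      (fun x => (F.isStripFlow.strictMonoOn_streamFn x).monotoneOn) hprim hmono
      (fun _ hs => F.tendsto_streamFn hs) tendsto_const_nhds
  have hmem := invIcc_mem_Icc zero_le_one hprim (hmono.monotoneOn (left_mem_Icc.2 zero_le_one)
    (right_mem_Icc.2 zero_le_one) zero_le_one) ψ
  refine (F.tendsto_velocity_upstream (fun x => F.isStripFlow.level_mem_Icc (x, ψ)) hmem
    hlevel).congr fun x => ?_
  exact flatVelocity_of_mem (F.isStripFlow.level_mem_Icc (x, ψ))

theorem isStreamFlow (F : IsNozzleFlow h₀ h₁ U u p) {M : ℝ}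
    (hM : ∀ z ∈ nozzle h₀ h₁, ‖u z‖ ≤ M) :
    IsStreamFlow (∫ t in (0 : ℝ)..1, U t) M (parallelSpeed U) (streamHeight h₀ h₁ u)
      (fun w => (u (w.1, streamHeight h₀ h₁ u w)).1)
      (fun w => (u (w.1, streamHeight h₀ h₁ u w)).2)
      (fun w => p (w.1, streamHeight h₀ h₁ u w)) := by
  have hmem := fun w hw => F.streamHeight_mem_nozzle (w := w) hw
  have hpos := fun w hw => F.velocity_pos _ (hmem w hw)
  have d₁ := fun w hw => F.hasFDerivAt_comp_streamHeight (w := w) hw rfl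
    (F.differentiableAt_velocity (hmem w hw)).fst
  have d₂ := fun w hw => F.hasFDerivAt_comp_streamHeight (w := w) hw rfl
    (F.differentiableAt_velocity (hmem w hw)).snd
  have d₃ := fun w hw => F.hasFDerivAt_comp_streamHeight (w := w) hw rfl
    (F.differentiableAt_pressure (hmem w hw))
  refine ⟨F.continuous_streamHeight, fun w hw => F.hasFDerivAt_streamHeight hw, hpos,
    fun w hw => (le_abs_self _).trans ((norm_fst_le _).trans (hM _ (hmem w hw))),
    fun w hw => (norm_snd_le _).trans (hM _ (hmem w hw)),
    fun w hw => (d₁ w hw).differentiableAt, fun w hw => (d₂ w hw).differentiableAt,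
    fun w hw => (d₃ w hw).differentiableAt, fun w hw => ?_, fun w hw => ?_,
    fun ψ _ => (F.tendsto_velocity_streamline ψ).fst_nhds,
    fun ψ _ => (F.tendsto_velocity_streamline ψ).snd_nhds⟩
  · obtain ⟨euler₁, euler₂, -⟩ := F.euler.2.2.2.1 _ (hmem w hw)
    have hne := (hpos w hw).ne'
    rw [pd1_eq_of_hasFDerivAt (d₁ w hw), pd1_eq_of_hasFDerivAt (d₂ w hw),
      pd1_eq_of_hasFDerivAt (d₃ w hw)]
    field_simp
    linear_combination (u (w.1, streamHeight h₀ h₁ u w)).1 * euler₁ +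
      (u (w.1, streamHeight h₀ h₁ u w)).2 * euler₂
  · have euler₂ := (F.euler.2.2.2.1 _ (hmem w hw)).2.1
    have hne := (hpos w hw).ne'
    rw [pd1_eq_of_hasFDerivAt (d₂ w hw), pd2_eq_of_hasFDerivAt (d₃ w hw)]
    field_simp
    linear_combination euler₂

theorem abs_streamHeight_sub_le (F : IsNozzleFlow h₀ h₁ U u p) (F' : IsNozzleFlow h₀ h₁ U v q)
    (w : ℝ × ℝ) :
    |streamHeight h₀ h₁ u w - streamHeight h₀ h₁ v w| ≤ h₁ w.1 - h₀ w.1 :=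
  Real.dist_le_of_mem_Icc
    (nozzleHeight_mem_Icc (F.isNozzle.lt w.1).le (F.isStripFlow.level_mem_Icc w))
    (nozzleHeight_mem_Icc (F.isNozzle.lt w.1).le (F'.isStripFlow.level_mem_Icc w))

end IsNozzleFlow

theorem stmt0_general {h₀ h₁ U : ℝ → ℝ} {u v : ℝ × ℝ → ℝ × ℝ} {p q : ℝ × ℝ → ℝ}
    (hu : IsNozzleFlow h₀ h₁ U u p) (hv : IsNozzleFlow h₀ h₁ U v q) :
    EqOn u v (nozzle h₀ h₁) := by
  obtain ⟨M, hM⟩ := hu.exists_norm_velocity_le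
  obtain ⟨M', hM'⟩ := hv.exists_norm_velocity_le
  obtain ⟨W, hW⟩ := hu.isNozzle.bddAbove_width
  have F := hu.isStreamFlow fun z hz => (hM z hz).trans (le_max_left M M')
  have F' := hv.isStreamFlow fun z hz => (hM' z hz).trans (le_max_right M M')
  have hbot (x : ℝ) : streamHeight h₀ h₁ u (x, 0) = streamHeight h₀ h₁ v (x, 0) := by
    rw [hu.streamHeight_bottom, hv.streamHeight_bottom]
  have htop (x : ℝ) : streamHeight h₀ h₁ u (x, ∫ t in (0 : ℝ)..1, U t) =
      streamHeight h₀ h₁ v (x, ∫ t in (0 : ℝ)..1, U t) := by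
    rw [hu.streamHeight_top, hv.streamHeight_top]
  have hdiff (w : ℝ × ℝ) (_ : w.2 ∈ Ioo 0 (∫ t in (0 : ℝ)..1, U t)) :
      |streamHeight h₀ h₁ u w - streamHeight h₀ h₁ v w| ≤ W :=
    (hu.abs_streamHeight_sub_le hv w).trans (hW (mem_range_self w.1))
  intro z hz
  obtain ⟨ψ, hψ, hψz⟩ := hu.exists_streamHeight_eq hz
  have hheight := F.height_eq F' hbot htop hdiff (w := (z.1, ψ)) hψ
  have hvel := F.velocity_eq F' hbot htop hdiff (w := (z.1, ψ)) hψ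
  simp only [← hheight, hψz] at hvel
  exact Prod.ext hvel.1 hvel.2

/-- Uniqueness of solutions of the steady incompressible Euler system in a nozzle with
positive horizontal velocity and Poiseuille flow as upstream far-field state. -/
theorem stmt0
    (Q α : ℝ) (hQ : 0 < Q) (hα : α ∈ Set.Ioo (0 : ℝ) 1)
    (h₀ h₁ : ℝ → ℝ)
    (hh₀ : ContDiff ℝ 2 h₀) (hh₁ : ContDiff ℝ 2 h₁)
    (hh₀α : ∃ C : ℝ, ∀ x y : ℝ, |deriv (deriv h₀) x - deriv (deriv h₀) y| ≤ C * |x - y| ^ α)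
    (hh₁α : ∃ C : ℝ, ∀ x y : ℝ, |deriv (deriv h₁) x - deriv (deriv h₁) y| ≤ C * |x - y| ^ α)
    (hlt : ∀ x₁ : ℝ, h₀ x₁ < h₁ x₁)
    (Lm Lp a b : ℝ) (hLm : Lm < 0) (hLp : 0 < Lp)
    (ha : 0 ≤ a) (hab : a < b) (hb : b ≤ 1)
    (hup : ∀ x₁ ≤ Lm, h₀ x₁ = 0 ∧ h₁ x₁ = 1)
    (hdown : ∀ x₁ ≥ Lp, h₀ x₁ = a ∧ h₁ x₁ = b)
    (Ω : Set (ℝ × ℝ)) (hΩ : Ω = {x : ℝ × ℝ | h₀ x.1 < x.2 ∧ x.2 < h₁ x.1})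
    (u v : ℝ × ℝ → ℝ × ℝ) (p q : ℝ × ℝ → ℝ)
    (hu : IsEulerSlip h₀ h₁ Ω u p) (hv : IsEulerSlip h₀ h₁ Ω v q)
    (hu1 : ∀ x ∈ Ω, 0 < (u x).1) (hv1 : ∀ x ∈ Ω, 0 < (v x).1)
    (huf : ∀ ε > 0, ∃ M : ℝ, ∀ x₁ ≤ M, ∀ x₂ ∈ Set.Icc (0 : ℝ) 1,
      |(u (x₁, x₂)).1 - 6 * Q * x₂ * (1 - x₂)| < ε)
    (hvf : ∀ ε > 0, ∃ M : ℝ, ∀ x₁ ≤ M, ∀ x₂ ∈ Set.Icc (0 : ℝ) 1,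
      |(v (x₁, x₂)).1 - 6 * Q * x₂ * (1 - x₂)| < ε) :
    ∀ x ∈ Ω, u x = v x := by
  subst hΩ
  have hN : IsNozzle h₀ h₁ := isNozzle_of_eq_const hh₀ hh₁ hlt hup hdown
  have hU (s : ℝ) (hs : s ∈ Ioo (0 : ℝ) 1) : 0 < 6 * Q * s * (1 - s) :=
    mul_pos (mul_pos (by positivity) hs.1) (sub_pos.2 hs.2)
  exact fun z hz => stmt0_general
    ⟨hN, hu, hu1, hU, tendstoUniformlyOn_atBot_of_forall_exists huf⟩
    ⟨hN, hv, hv1, hU, tendstoUniformlyOn_atBot_of_forall_exists hvf⟩ hz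
end
end

section
/- Let (u,p) be a solution of the steady incompressible Euler system in the strip Ω̂=ℝ×(0,1) with the slip condition u₂=0 on ∂Ω̂. If u₁(x₁,x₂)>0 for all (x₁,x₂)∈Ω̂ and u₁(x₁,x₂)→6Qx₂(1−x₂) as x₁→−∞ uniformly for x₂∈[0,1], then u(x₁,x₂)=(6Qx₂(1−x₂),0) for all (x₁,x₂)∈Ω̂̄, i.e., u is the Poiseuille flow. -/
open Real Set MeasureTheory

noncomputable section

/-- The strip `Ω̂ = ℝ × (0,1)`. -/
def Strip : Set (ℝ × ℝ) := {x : ℝ × ℝ | 0 < x.2 ∧ x.2 < 1}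

/-- `(u, p)` is a solution of the steady incompressible Euler system in the strip
`Ω̂ = ℝ × (0,1)` with slip condition: `u ∈ C²(Ω̂;ℝ²)`, `u` Lipschitz on the closure,
`p ∈ C¹(Ω̂)`, the Euler equations hold in `Ω̂`, and `u₂(x₁,0) = u₂(x₁,1) = 0`. -/
def IsEulerSlipStrip (u : ℝ × ℝ → ℝ × ℝ) (p : ℝ × ℝ → ℝ) : Prop :=
  ContDiffOn ℝ 2 u Strip ∧ (∃ K, LipschitzOnWith K u (closure Strip)) ∧
  ContDiffOn ℝ 1 p Strip ∧
  (∀ x ∈ Strip,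
    (u x).1 * pd1 (fun y => (u y).1) x + (u x).2 * pd2 (fun y => (u y).1) x + pd1 p x = 0 ∧
    (u x).1 * pd1 (fun y => (u y).2) x + (u x).2 * pd2 (fun y => (u y).2) x + pd2 p x = 0 ∧
    pd1 (fun y => (u y).1) x + pd2 (fun y => (u y).2) x = 0) ∧
  (∀ x₁ : ℝ, (u (x₁, 0)).2 = 0 ∧ (u (x₁, 1)).2 = 0)

/-!
The slope `σ = u₂ / u₁` of the velocity satisfies `u₁² ∇σ = (-∂₂p, ∂₁p)`, so that
`div (u₁² ∇σ) = 0`. The flux weight is degenerate at the walls, but there `u₁ σ = u₂` vanishes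
linearly, by the slip condition and the Lipschitz bound. Testing the equation with `ξ² σ`, where `ξ`
is a cutoff at length scale `R` which is logarithmic in the distance to the walls, bounds the energy
`∫ ξ² u₁² |∇σ|²` by `4 ∫ u₂² |∇ξ|² = O(1 / R)`; hence `σ` is a constant `c`. Incompressibility then
says that `u₁` is constant along lines of direction `(1, c)`. If `c ≠ 0`, such a line reaches a
wall, where `c u₁ = u₂ = 0`, which is impossible. So `c = 0`, the flow is a shear flow, and its
profile is read off at infinity.
-/

open Filter Topology

section PartialDerivatives

variable {E : Type*} [NormedAddCommGroup E] [NormedSpace ℝ E]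

theorem differentiableAt_of_contDiffOn {F : Type*} [NormedAddCommGroup F] [NormedSpace ℝ F]
    {f : E → F} {s : Set E} {n : WithTop ℕ∞} (hf : ContDiffOn ℝ n f s) (hn : n ≠ 0) (hs : IsOpen s)
    {x : E} (hx : x ∈ s) : DifferentiableAt ℝ f x :=
  (hf.contDiffAt (hs.mem_nhds hx)).differentiableAt hn

theorem contDiffOn_fderiv_apply {F : Type*} [NormedAddCommGroup F] [NormedSpace ℝ F] {f : E → F}
    {s : Set E} {m n : WithTop ℕ∞} (hf : ContDiffOn ℝ n f s) (hs : IsOpen s) (hmn : m + 1 ≤ n)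
    (v : E) : ContDiffOn ℝ m (fun x => fderiv ℝ f x v) s :=
  (hf.fderiv_of_isOpen hs hmn).clm_apply contDiffOn_const

theorem fderiv_mul_apply {f g : E → ℝ} {x : E} (hf : DifferentiableAt ℝ f x)
    (hg : DifferentiableAt ℝ g x) (v : E) :
    fderiv ℝ (fun y => f y * g y) x v = fderiv ℝ f x v * g x + f x * fderiv ℝ g x v := by
  rw [fderiv_fun_mul hf hg]
  simp only [add_apply, smul_apply, smul_eq_mul]
  ring

theorem sq_mul_fderiv_div_apply {f g : E → ℝ} {x : E} (hf : DifferentiableAt ℝ f x)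
    (hg : DifferentiableAt ℝ g x) (hx : g x ≠ 0) (v : E) :
    g x ^ 2 * fderiv ℝ (fun y => f y / g y) x v = g x * fderiv ℝ f x v - f x * fderiv ℝ g x v := by
  have hmul : (fun y => f y / g y * g y) =ᶠ[𝓝 x] f := by
    filter_upwards [hg.continuousAt.eventually_ne hx] with y hy using div_mul_cancel₀ _ hy
  have hdiv : DifferentiableAt ℝ (fun y => f y / g y) x := by
    simpa only [div_eq_mul_inv] using hf.fun_mul (hg.fun_inv hx)
  have hprod := fderiv_mul_apply hdiv hg v
  rw [hmul.fderiv_eq] at hprod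
  rw [hprod]
  field_simp
  ring

theorem fderiv_apply_eq_pd (f : ℝ × ℝ → ℝ) (x v : ℝ × ℝ) :
    fderiv ℝ f x v = v.1 * pd1 f x + v.2 * pd2 f x := by
  have hv : v = v.1 • ((1, 0) : ℝ × ℝ) + v.2 • ((0, 1) : ℝ × ℝ) := by ext <;> simp
  conv_lhs => rw [hv, map_add, map_smul, map_smul]
  rfl

theorem pd1_mul {f g : ℝ × ℝ → ℝ} {x : ℝ × ℝ} (hf : DifferentiableAt ℝ f x)
    (hg : DifferentiableAt ℝ g x) :
    pd1 (fun y => f y * g y) x = pd1 f x * g x + f x * pd1 g x :=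
  fderiv_mul_apply hf hg (1, 0)

theorem pd2_mul {f g : ℝ × ℝ → ℝ} {x : ℝ × ℝ} (hf : DifferentiableAt ℝ f x)
    (hg : DifferentiableAt ℝ g x) :
    pd2 (fun y => f y * g y) x = pd2 f x * g x + f x * pd2 g x :=
  fderiv_mul_apply hf hg (0, 1)

theorem contDiffOn_pd1 {f : ℝ × ℝ → ℝ} {s : Set (ℝ × ℝ)} {m n : WithTop ℕ∞}
    (hf : ContDiffOn ℝ n f s) (hs : IsOpen s) (hmn : m + 1 ≤ n) : ContDiffOn ℝ m (pd1 f) s :=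
  contDiffOn_fderiv_apply hf hs hmn (1, 0)

theorem contDiffOn_pd2 {f : ℝ × ℝ → ℝ} {s : Set (ℝ × ℝ)} {m n : WithTop ℕ∞}
    (hf : ContDiffOn ℝ n f s) (hs : IsOpen s) (hmn : m + 1 ≤ n) : ContDiffOn ℝ m (pd2 f) s :=
  contDiffOn_fderiv_apply hf hs hmn (0, 1)

theorem continuousOn_pd1 {f : ℝ × ℝ → ℝ} {s : Set (ℝ × ℝ)} (hf : ContDiffOn ℝ 1 f s)
    (hs : IsOpen s) : ContinuousOn (pd1 f) s :=
  (contDiffOn_pd1 (m := 0) hf hs (zero_add 1).le).continuousOn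

theorem continuousOn_pd2 {f : ℝ × ℝ → ℝ} {s : Set (ℝ × ℝ)} (hf : ContDiffOn ℝ 1 f s)
    (hs : IsOpen s) : ContinuousOn (pd2 f) s :=
  (contDiffOn_pd2 (m := 0) hf hs (zero_add 1).le).continuousOn

theorem contDiffOn_succ_of_pd {f : ℝ × ℝ → ℝ} {s : Set (ℝ × ℝ)} {n : ℕ} (hs : IsOpen s)
    (hf : DifferentiableOn ℝ f s) (h1 : ContDiffOn ℝ n (pd1 f) s) (h2 : ContDiffOn ℝ n (pd2 f) s) :
    ContDiffOn ℝ (n + 1) f s := by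
  refine (contDiffOn_succ_iff_fderiv_of_isOpen hs).2 ⟨hf, by simp, ?_⟩
  have hfderiv : ∀ x, fderiv ℝ f x = pd1 f x • ContinuousLinearMap.fst ℝ ℝ ℝ
      + pd2 f x • ContinuousLinearMap.snd ℝ ℝ ℝ := fun x => by
    ext <;> simp [pd1, pd2]
  exact ((h1.smul contDiffOn_const).add (h2.smul contDiffOn_const)).congr fun x _ => hfderiv x

theorem pd1_pd2_comm {f : ℝ × ℝ → ℝ} {x : ℝ × ℝ} (hf : ContDiffAt ℝ 2 f x) :
    pd1 (pd2 f) x = pd2 (pd1 f) x := by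
  have hdiff : DifferentiableAt ℝ (fderiv ℝ f) x :=
    (hf.fderiv_right (m := 1) (by norm_num)).differentiableAt one_ne_zero
  have hsecond : ∀ v w, fderiv ℝ (fun y => fderiv ℝ f y v) x w = fderiv ℝ (fderiv ℝ f) x w v :=
    fun v w => by
      rw [fderiv_clm_apply hdiff (differentiableAt_const v)]
      simp
  calc pd1 (pd2 f) x = fderiv ℝ (fderiv ℝ f) x (1, 0) (0, 1) := hsecond _ _
    _ = fderiv ℝ (fderiv ℝ f) x (0, 1) (1, 0) := hf.isSymmSndFDerivAt (by simp) _ _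
    _ = pd2 (pd1 f) x := (hsecond _ _).symm

theorem pd1_eq_of_hasDerivAt {f : ℝ × ℝ → ℝ} {x : ℝ × ℝ} {c : ℝ} (hf : DifferentiableAt ℝ f x)
    (h : HasDerivAt (fun t => f (t, x.2)) c x.1) : pd1 f x = c :=
  (hf.hasFDerivAt.comp_hasDerivAt x.1
    ((hasDerivAt_id x.1).prodMk (hasDerivAt_const x.1 x.2))).unique h

theorem pd2_eq_of_hasDerivAt {f : ℝ × ℝ → ℝ} {x : ℝ × ℝ} {c : ℝ} (hf : DifferentiableAt ℝ f x)
    (h : HasDerivAt (fun t => f (x.1, t)) c x.2) : pd2 f x = c :=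
  (hf.hasFDerivAt.comp_hasDerivAt x.2
    ((hasDerivAt_const x.2 x.1).prodMk (hasDerivAt_id x.2))).unique h

/-- The squared Euclidean norm `|∇f|²` of the gradient of `f`. -/
def gradNormSq (f : ℝ × ℝ → ℝ) (x : ℝ × ℝ) : ℝ := pd1 f x ^ 2 + pd2 f x ^ 2

theorem gradNormSq_nonneg (f : ℝ × ℝ → ℝ) (x : ℝ × ℝ) : 0 ≤ gradNormSq f x := by
  unfold gradNormSq
  positivity

theorem fderiv_eq_zero_of_gradNormSq_eq_zero {f : ℝ × ℝ → ℝ} {x : ℝ × ℝ}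
    (h : gradNormSq f x = 0) : fderiv ℝ f x = 0 := by
  obtain ⟨h1, h2⟩ := (add_eq_zero_iff_of_nonneg (sq_nonneg _) (sq_nonneg _)).1 h
  refine ContinuousLinearMap.ext fun v => ?_
  rw [sq_eq_zero_iff] at h1 h2
  simp [fderiv_apply_eq_pd, h1, h2]

theorem continuousOn_gradNormSq {f : ℝ × ℝ → ℝ} {s : Set (ℝ × ℝ)} (hf : ContDiffOn ℝ 1 f s)
    (hs : IsOpen s) : ContinuousOn (gradNormSq f) s :=
  ((continuousOn_pd1 hf hs).pow 2).add ((continuousOn_pd2 hf hs).pow 2)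

/-- The weighted Laplacian `div (w ∇σ)`. -/
def divGrad (w σ : ℝ × ℝ → ℝ) (x : ℝ × ℝ) : ℝ :=
  pd1 (fun y => w y * pd1 σ y) x + pd2 (fun y => w y * pd2 σ y) x

end PartialDerivatives

section Energy

theorem frontier_Icc_prod {a b : ℝ × ℝ} (hab : a ≤ b) :
    frontier (Icc a b) = Icc a.1 b.1 ×ˢ {a.2, b.2} ∪ {a.1, b.1} ×ˢ Icc a.2 b.2 := by
  rw [Icc_prod_eq, frontier_prod_eq, frontier_Icc hab.1, frontier_Icc hab.2, closure_Icc,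
    closure_Icc]

variable {s : Set (ℝ × ℝ)} {a b : ℝ × ℝ}

theorem integral_pd_add_pd_eq_zero {f g : ℝ × ℝ → ℝ} (hs : IsOpen s) (hf : ContDiffOn ℝ 1 f s)
    (hg : ContDiffOn ℝ 1 g s) (hsub : Icc a b ⊆ s) (hf0 : EqOn f 0 (frontier (Icc a b)))
    (hg0 : EqOn g 0 (frontier (Icc a b))) : ∫ x in Icc a b, (pd1 f x + pd2 g x) = 0 := by
  by_cases hab : a ≤ b
  swap
  · simp [Icc_eq_empty hab]
  rw [frontier_Icc_prod hab] at hf0 hg0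
  have hinner : Ioo a.1 b.1 ×ˢ Ioo a.2 b.2 ⊆ s := fun x hx =>
    hsub ⟨⟨hx.1.1.le, hx.2.1.le⟩, ⟨hx.1.2.le, hx.2.2.le⟩⟩
  have hhorizontal : ∀ r ∈ ({a.2, b.2} : Set ℝ), ∫ t in a.1..b.1, g (t, r) = 0 := fun r hr =>
    intervalIntegral.integral_zero_ae (ae_of_all _ fun t ht =>
      hg0 (.inl ⟨Ioc_subset_Icc_self (uIoc_of_le hab.1 ▸ ht), hr⟩))
  have hvertical : ∀ r ∈ ({a.1, b.1} : Set ℝ), ∫ t in a.2..b.2, f (r, t) = 0 := fun r hr =>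
    intervalIntegral.integral_zero_ae (ae_of_all _ fun t ht =>
      hf0 (.inr ⟨hr, Ioc_subset_Icc_self (uIoc_of_le hab.2 ▸ ht)⟩))
  have hdivergence := integral_divergence_prod_Icc_of_hasFDerivAt_of_le f g _ _ a b hab
    (hf.continuousOn.mono hsub) (hg.continuousOn.mono hsub)
    (fun x hx => (differentiableAt_of_contDiffOn hf one_ne_zero hs (hinner hx)).hasFDerivAt)
    (fun x hx => (differentiableAt_of_contDiffOn hg one_ne_zero hs (hinner hx)).hasFDerivAt)
    ((((continuousOn_pd1 hf hs).add (continuousOn_pd2 hg hs)).mono hsub).integrableOn_compact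
      isCompact_Icc)
  calc ∫ x in Icc a b, (pd1 f x + pd2 g x) = _ := hdivergence
    _ = 0 := by simp [hhorizontal, hvertical]

theorem integral_grad_dot_eq_neg_integral_mul_div {φ F G : ℝ × ℝ → ℝ} (hs : IsOpen s)
    (hφ : ContDiffOn ℝ 1 φ s) (hF : ContDiffOn ℝ 1 F s) (hG : ContDiffOn ℝ 1 G s)
    (hsub : Icc a b ⊆ s) (hφ0 : EqOn φ 0 (frontier (Icc a b))) :
    ∫ x in Icc a b, (pd1 φ x * F x + pd2 φ x * G x)
      = -∫ x in Icc a b, φ x * (pd1 F x + pd2 G x) := by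
  have hgrad : IntegrableOn (fun x => pd1 φ x * F x + pd2 φ x * G x) (Icc a b) :=
    ((((continuousOn_pd1 hφ hs).mul hF.continuousOn).add
      ((continuousOn_pd2 hφ hs).mul hG.continuousOn)).mono hsub).integrableOn_compact isCompact_Icc
  have hdiv : IntegrableOn (fun x => φ x * (pd1 F x + pd2 G x)) (Icc a b) :=
    ((hφ.continuousOn.mul ((continuousOn_pd1 hF hs).add (continuousOn_pd2 hG hs))).mono
      hsub).integrableOn_compact isCompact_Icc
  rw [eq_neg_iff_add_eq_zero, ← integral_add hgrad hdiv,
    ← integral_pd_add_pd_eq_zero hs (hφ.mul hF) (hφ.mul hG) hsub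
      (fun x hx => by simp [hφ0 hx]) (fun x hx => by simp [hφ0 hx])]
  refine setIntegral_congr_fun measurableSet_Icc fun x hx => ?_
  have hdiff : ∀ {f : ℝ × ℝ → ℝ}, ContDiffOn ℝ 1 f s → DifferentiableAt ℝ f x :=
    fun hf => differentiableAt_of_contDiffOn hf one_ne_zero hs (hsub hx)
  linear_combination -pd1_mul (hdiff hφ) (hdiff hF) - pd2_mul (hdiff hφ) (hdiff hG)

theorem sq_mul_gradNormSq_le {w σ ξ : ℝ × ℝ → ℝ} {x : ℝ × ℝ} (hw : 0 ≤ w x)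
    (hσ : DifferentiableAt ℝ σ x) (hξ : DifferentiableAt ℝ ξ x) :
    ξ x ^ 2 * (w x * gradNormSq σ x) ≤
      2 * (pd1 (fun y => ξ y ^ 2 * σ y) x * (w x * pd1 σ x)
        + pd2 (fun y => ξ y ^ 2 * σ y) x * (w x * pd2 σ x))
      + 4 * (w x * σ x ^ 2 * gradNormSq ξ x) := by
  have hderiv : ∀ v, fderiv ℝ (fun y => ξ y ^ 2 * σ y) x v
      = 2 * ξ x * fderiv ℝ ξ x v * σ x + ξ x ^ 2 * fderiv ℝ σ x v := fun v => by
    rw [fderiv_mul_apply (hξ.fun_pow 2) hσ, fderiv_fun_pow 2 hξ]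
    simp
  have hsquare : 0 ≤ w x * ((ξ x * pd1 σ x + 2 * σ x * pd1 ξ x) ^ 2
      + (ξ x * pd2 σ x + 2 * σ x * pd2 ξ x) ^ 2) := by positivity
  simp only [gradNormSq, pd1, pd2, hderiv] at hsquare ⊢
  linarith

/-- Caccioppoli's inequality. -/
theorem integral_sq_mul_gradNormSq_le {w σ ξ : ℝ × ℝ → ℝ} (hs : IsOpen s)
    (hw : ContDiffOn ℝ 1 w s) (hσ : ContDiffOn ℝ 2 σ s) (hξ : ContDiffOn ℝ 1 ξ s)
    (hsub : Icc a b ⊆ s) (hw0 : ∀ x ∈ Icc a b, 0 ≤ w x) (hdiv : ∀ x ∈ Icc a b, divGrad w σ x = 0)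
    (hξ0 : EqOn ξ 0 (frontier (Icc a b))) :
    ∫ x in Icc a b, ξ x ^ 2 * (w x * gradNormSq σ x)
      ≤ 4 * ∫ x in Icc a b, w x * σ x ^ 2 * gradNormSq ξ x := by
  set φ : ℝ × ℝ → ℝ := fun x => ξ x ^ 2 * σ x
  have hσ1 : ContDiffOn ℝ 1 σ s := hσ.of_le one_le_two
  have hφ : ContDiffOn ℝ 1 φ s := (hξ.pow 2).mul hσ1
  have hflux1 : ContDiffOn ℝ 1 (fun x => w x * pd1 σ x) s :=
    hw.mul (contDiffOn_pd1 hσ hs one_add_one_eq_two.le)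
  have hflux2 : ContDiffOn ℝ 1 (fun x => w x * pd2 σ x) s :=
    hw.mul (contDiffOn_pd2 hσ hs one_add_one_eq_two.le)
  have hweak : ∫ x in Icc a b, (pd1 φ x * (w x * pd1 σ x) + pd2 φ x * (w x * pd2 σ x)) = 0 := by
    rw [integral_grad_dot_eq_neg_integral_mul_div hs hφ hflux1 hflux2 hsub
      (fun x hx => by simp [φ, hξ0 hx]), neg_eq_zero]
    exact setIntegral_eq_zero_of_forall_eq_zero fun x hx => mul_eq_zero_of_right _ (hdiv x hx)
  have hinteg : ∀ {f : ℝ × ℝ → ℝ}, ContinuousOn f s → IntegrableOn f (Icc a b) :=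
    fun hf => (hf.mono hsub).integrableOn_compact isCompact_Icc
  have hcross : IntegrableOn
      (fun x => 2 * (pd1 φ x * (w x * pd1 σ x) + pd2 φ x * (w x * pd2 σ x))) (Icc a b) :=
    (hinteg (((continuousOn_pd1 hφ hs).mul hflux1.continuousOn).add
      ((continuousOn_pd2 hφ hs).mul hflux2.continuousOn))).const_mul 2
  have hright : IntegrableOn (fun x => 4 * (w x * σ x ^ 2 * gradNormSq ξ x)) (Icc a b) :=
    (hinteg ((hw.continuousOn.mul (hσ.continuousOn.pow 2)).mul
      (continuousOn_gradNormSq hξ hs))).const_mul 4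
  have hdiff : ∀ {f : ℝ × ℝ → ℝ}, ContDiffOn ℝ 1 f s → ∀ x ∈ Icc a b, DifferentiableAt ℝ f x :=
    fun hf x hx => differentiableAt_of_contDiffOn hf one_ne_zero hs (hsub hx)
  calc ∫ x in Icc a b, ξ x ^ 2 * (w x * gradNormSq σ x)
      ≤ ∫ x in Icc a b, (2 * (pd1 φ x * (w x * pd1 σ x) + pd2 φ x * (w x * pd2 σ x))
          + 4 * (w x * σ x ^ 2 * gradNormSq ξ x)) :=
        setIntegral_mono_on (hinteg ((hξ.continuousOn.pow 2).mul
          (hw.continuousOn.mul (continuousOn_gradNormSq hσ1 hs)))) (hcross.add hright)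
          measurableSet_Icc fun x hx =>
            sq_mul_gradNormSq_le (hw0 x hx) (hdiff hσ1 x hx) (hdiff hξ x hx)
    _ = 4 * ∫ x in Icc a b, w x * σ x ^ 2 * gradNormSq ξ x := by
        rw [integral_add hcross hright, integral_const_mul, integral_const_mul, hweak, mul_zero,
          zero_add]

end Energy

section Strip

theorem strip_eq_prod : Strip = univ ×ˢ Ioo (0 : ℝ) 1 := by
  ext
  simp [Strip]

theorem isOpen_strip : IsOpen Strip := by
  rw [strip_eq_prod]
  exact isOpen_univ.prod isOpen_Ioo

theorem convex_strip : Convex ℝ Strip := by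
  rw [strip_eq_prod]
  exact convex_univ.prod (convex_Ioo 0 1)

theorem mem_closure_strip {x : ℝ × ℝ} : x ∈ closure Strip ↔ x.2 ∈ Icc (0 : ℝ) 1 := by
  rw [strip_eq_prod, closure_prod_eq, closure_Ioo zero_ne_one]
  simp

end Strip

section Cutoff

/-- The box `[-R, R] × [exp (-R), 1 - exp (-R)]`; these boxes exhaust the strip as `R → ∞`. -/
def stripBox (R : ℝ) : Set (ℝ × ℝ) := Icc (-R, exp (-R)) (R, 1 - exp (-R))

theorem stripBox_subset_strip (R : ℝ) : stripBox R ⊆ Strip := fun _ hx =>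
  ⟨(exp_pos _).trans_le hx.1.2, hx.2.2.trans_lt (sub_lt_self _ (exp_pos _))⟩

theorem stripBox_mono : Monotone stripBox := fun _ _ h =>
  Icc_subset_Icc ⟨neg_le_neg h, exp_le_exp.2 (neg_le_neg h)⟩
    ⟨h, sub_le_sub_left (exp_le_exp.2 (neg_le_neg h)) 1⟩

theorem volume_real_stripBox_le {R : ℝ} (hR : 0 ≤ R) : volume.real (stripBox R) ≤ 2 * R := by
  have hheight : max (1 - exp (-R) - exp (-R)) 0 ≤ 1 :=
    max_le (by linarith [exp_pos (-R)]) zero_le_one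
  rw [stripBox, Icc_prod_eq, Measure.volume_eq_prod, measureReal_prod_prod, volume_real_Icc_of_le
    (neg_le_self hR), volume_real_Icc, sub_neg_eq_add, ← two_mul]
  exact mul_le_of_le_one_right (by positivity) hheight

theorem exists_mem_interior_stripBox {x : ℝ × ℝ} (hx : x ∈ Strip) :
    ∃ r > 0, x ∈ interior (stripBox r) := by
  have hexp : Tendsto (fun r : ℝ => exp (-r)) atTop (𝓝 0) := tendsto_exp_neg_atTop_nhds_zero
  obtain ⟨r, hr0, hr1, hbot, htop⟩ := ((eventually_gt_atTop 0).and <|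
    (eventually_gt_atTop |x.1|).and <| (hexp.eventually_lt_const hx.1).and
      (hexp.eventually_lt_const (sub_pos.2 hx.2))).exists
  refine ⟨r, hr0, ?_⟩
  rw [stripBox, Icc_prod_eq, interior_prod_eq, interior_Icc, interior_Icc]
  exact ⟨abs_lt.1 hr1, hbot, lt_sub_comm.1 htop⟩

/-- The logarithmic cutoff on `(0, 1]`, which increases from `0` at `exp (-R)` to `1` at `1`. -/
def logCutoff (R t : ℝ) : ℝ := 1 + log t / R

theorem logCutoff_exp_neg {R : ℝ} (hR : R ≠ 0) : logCutoff R (exp (-R)) = 0 := by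
  rw [logCutoff, log_exp, neg_div, div_self hR, add_neg_cancel]

theorem logCutoff_le_one {R t : ℝ} (hR : 0 ≤ R) (ht0 : 0 ≤ t) (ht1 : t ≤ 1) : logCutoff R t ≤ 1 :=
  add_le_of_nonpos_right (div_nonpos_of_nonpos_of_nonneg (log_nonpos ht0 ht1) hR)

theorem one_sub_div_le_logCutoff {R r t : ℝ} (hR : 0 ≤ R) (ht : exp (-r) ≤ t) :
    1 - r / R ≤ logCutoff R t := by
  have hlog : -r ≤ log t := (le_log_iff_exp_le ((exp_pos _).trans_le ht)).2 ht
  rw [logCutoff, sub_eq_add_neg, ← neg_div]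
  gcongr

theorem logCutoff_nonneg {R t : ℝ} (hR : 0 < R) (ht : exp (-R) ≤ t) : 0 ≤ logCutoff R t := by
  simpa [hR.ne'] using one_sub_div_le_logCutoff hR.le ht

theorem hasDerivAt_logCutoff (R : ℝ) {t : ℝ} (ht : t ≠ 0) :
    HasDerivAt (logCutoff R) (t⁻¹ / R) t :=
  ((hasDerivAt_log ht).div_const R).const_add 1

/-- A cutoff function on `stripBox R`, which vanishes on the boundary of that box and is close to
`1` on `stripBox r` for `r ≪ R`. It is not truncated to `0` outside `stripBox R`. -/
def stripCutoff (R : ℝ) (x : ℝ × ℝ) : ℝ :=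
  (1 - (x.1 / R) ^ 2) * (logCutoff R x.2 * logCutoff R (1 - x.2))

theorem contDiffOn_stripCutoff (R : ℝ) : ContDiffOn ℝ 1 (stripCutoff R) Strip := by
  have hbot : ContDiffOn ℝ 1 (fun x : ℝ × ℝ => log x.2) Strip :=
    contDiffOn_snd.log fun x hx => hx.1.ne'
  have htop : ContDiffOn ℝ 1 (fun x : ℝ × ℝ => log (1 - x.2)) Strip :=
    (contDiffOn_const.sub contDiffOn_snd).log fun x hx => (sub_pos.2 hx.2).ne'
  exact (contDiffOn_const.sub ((contDiffOn_fst.div_const R).pow 2)).mul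
    ((contDiffOn_const.add (hbot.div_const R)).mul (contDiffOn_const.add (htop.div_const R)))

theorem stripCutoff_eqOn_zero_frontier {R : ℝ} (hR : 0 < R) :
    EqOn (stripCutoff R) 0 (frontier (stripBox R)) := by
  by_cases hbox : ((-R, exp (-R)) : ℝ × ℝ) ≤ (R, 1 - exp (-R))
  swap
  · simp [stripBox, Icc_eq_empty hbox]
  rintro ⟨a, t⟩ hx
  rw [stripBox, frontier_Icc_prod hbox] at hx
  rcases hx with ⟨-, rfl | rfl⟩ | ⟨rfl | rfl, -⟩ <;>
    simp [stripCutoff, logCutoff_exp_neg, hR.ne']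

theorem half_le_stripCutoff {r R : ℝ} (hr : 0 < r) (hR : 4 * r ≤ R) {x : ℝ × ℝ}
    (hx : x ∈ stripBox r) : 1 / 2 ≤ stripCutoff R x := by
  have hR0 : 0 < R := by linarith
  have hratio : r / R ≤ 1 / 4 := by rw [div_le_iff₀ hR0]; linarith
  have hlong : 15 / 16 ≤ 1 - (x.1 / R) ^ 2 := by
    have habs : |x.1 / R| ≤ 1 / 4 := by
      rw [abs_div, abs_of_pos hR0]
      exact (div_le_div_of_nonneg_right (abs_le.2 ⟨hx.1.1, hx.2.1⟩) hR0.le).trans hratio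
    linarith [(sq_le_sq' (abs_le.1 habs).1 (abs_le.1 habs).2 : (x.1 / R) ^ 2 ≤ (1 / 4) ^ 2)]
  have hbot : 3 / 4 ≤ logCutoff R x.2 := by
    linarith [one_sub_div_le_logCutoff hR0.le hx.1.2]
  have htop : 3 / 4 ≤ logCutoff R (1 - x.2) := by
    linarith [one_sub_div_le_logCutoff hR0.le (le_sub_comm.1 hx.2.2)]
  calc (1 / 2 : ℝ) ≤ 15 / 16 * (3 / 4 * (3 / 4)) := by norm_num
    _ ≤ stripCutoff R x := by unfold stripCutoff; gcongr

theorem pd1_stripCutoff (R : ℝ) {x : ℝ × ℝ} (hx : x ∈ Strip) :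
    pd1 (stripCutoff R) x = -(2 * (x.1 / R) / R) * (logCutoff R x.2 * logCutoff R (1 - x.2)) := by
  refine pd1_eq_of_hasDerivAt
    (differentiableAt_of_contDiffOn (contDiffOn_stripCutoff R) one_ne_zero isOpen_strip hx) ?_
  have h := ((((hasDerivAt_id x.1).div_const R).pow 2).const_sub 1).mul_const
    (logCutoff R x.2 * logCutoff R (1 - x.2))
  exact h.congr_deriv (by simp only [id_eq]; push_cast; ring)

theorem pd2_stripCutoff (R : ℝ) {x : ℝ × ℝ} (hx : x ∈ Strip) :
    pd2 (stripCutoff R) x = (1 - (x.1 / R) ^ 2) *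
      (x.2⁻¹ / R * logCutoff R (1 - x.2) - logCutoff R x.2 * ((1 - x.2)⁻¹ / R)) := by
  refine pd2_eq_of_hasDerivAt
    (differentiableAt_of_contDiffOn (contDiffOn_stripCutoff R) one_ne_zero isOpen_strip hx) ?_
  have hbot := hasDerivAt_logCutoff R hx.1.ne'
  have htop := (hasDerivAt_logCutoff R (sub_pos.2 hx.2).ne').comp_const_sub 1 x.2
  exact ((hbot.mul htop).const_mul (1 - (x.1 / R) ^ 2)).congr_deriv (by ring)

/-- The logarithm is chosen so that the distance to the walls times the gradient of the cutoff is
of order `1 / R`, uniformly up to the walls. -/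
theorem sq_mul_gradNormSq_stripCutoff_le {R : ℝ} (hR : 0 < R) {x : ℝ × ℝ} (hx : x ∈ stripBox R) :
    (x.2 * (1 - x.2)) ^ 2 * gradNormSq (stripCutoff R) x ≤ 5 / R ^ 2 := by
  have hxs := stripBox_subset_strip R hx
  obtain ⟨ht, ht'⟩ : 0 < x.2 ∧ 0 < 1 - x.2 := ⟨hxs.1, sub_pos.2 hxs.2⟩
  have hr : |x.1 / R| ≤ 1 := by
    rw [abs_div, abs_of_pos hR, div_le_one hR]
    exact abs_le.2 ⟨hx.1.1, hx.2.1⟩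
  have hA0 := logCutoff_nonneg hR hx.1.2
  have hA1 := logCutoff_le_one hR.le ht.le hxs.2.le
  have hB0 := logCutoff_nonneg hR (le_sub_comm.1 hx.2.2)
  have hB1 := logCutoff_le_one hR.le ht'.le (sub_le_self 1 ht.le)
  rw [gradNormSq, pd1_stripCutoff R hxs, pd2_stripCutoff R hxs]
  set r := x.1 / R
  set A := logCutoff R x.2
  set B := logCutoff R (1 - x.2)
  have hr2 : r ^ 2 ≤ 1 := (sq_le_one_iff_abs_le_one r).2 hr
  have hlong : (x.2 * (1 - x.2) * r * (A * B)) ^ 2 ≤ 1 := by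
    rw [sq_le_one_iff_abs_le_one, abs_mul, abs_mul, abs_of_pos (mul_pos ht ht'),
      abs_of_nonneg (mul_nonneg hA0 hB0)]
    exact mul_le_one₀ (mul_le_one₀ (mul_le_one₀ hxs.2.le ht'.le (by linarith)) (abs_nonneg r) hr)
      (mul_nonneg hA0 hB0) (mul_le_one₀ hA1 hB0 hB1)
  have htrans : ((1 - r ^ 2) * ((1 - x.2) * B - x.2 * A)) ^ 2 ≤ 1 := by
    rw [sq_le_one_iff_abs_le_one, abs_mul]
    refine mul_le_one₀ (abs_le.2 ⟨by linarith, by linarith [sq_nonneg r]⟩) (abs_nonneg _)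
      (abs_le.2 ⟨?_, ?_⟩) <;> nlinarith
  calc _ = (4 * (x.2 * (1 - x.2) * r * (A * B)) ^ 2
        + ((1 - r ^ 2) * ((1 - x.2) * B - x.2 * A)) ^ 2) / R ^ 2 := by field_simp; ring
    _ ≤ 5 / R ^ 2 := by gcongr; linarith

end Cutoff

section Liouville

theorem eqOn_zero_interior_of_setIntegral_nonpos {X : Type*} [TopologicalSpace X]
    [MeasurableSpace X] {μ : Measure X} [μ.IsOpenPosMeasure] {s : Set X} {f : X → ℝ}
    (hs : MeasurableSet s) (hf : ContinuousOn f s) (hinteg : IntegrableOn f s μ)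
    (hf0 : ∀ x ∈ s, 0 ≤ f x) (h : ∫ x in s, f x ∂μ ≤ 0) : EqOn f 0 (interior s) := by
  have hzero : f =ᵐ[μ.restrict s] 0 :=
    (setIntegral_eq_zero_iff_of_nonneg_ae (ae_restrict_of_forall_mem hs hf0) hinteg).1
      (h.antisymm (setIntegral_nonneg hs hf0))
  exact Measure.eqOn_open_of_ae_eq (ae_restrict_of_ae_restrict_of_subset interior_subset hzero)
    isOpen_interior (hf.mono interior_subset) continuousOn_const

variable {w σ : ℝ × ℝ → ℝ} {K : ℝ}

theorem setIntegral_energy_stripBox_le (hw : ContDiffOn ℝ 1 w Strip) (hw0 : ∀ x ∈ Strip, 0 ≤ w x)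
    (hσ : ContDiffOn ℝ 2 σ Strip) (hdiv : ∀ x ∈ Strip, divGrad w σ x = 0)
    (hK : ∀ x ∈ Strip, w x * σ x ^ 2 ≤ K * (x.2 * (1 - x.2)) ^ 2) {R : ℝ} (hR : 0 < R) :
    ∫ x in stripBox R, stripCutoff R x ^ 2 * (w x * gradNormSq σ x) ≤ 40 * |K| / R := by
  have hsub := stripBox_subset_strip R
  have hbound : ∀ x ∈ stripBox R,
      ‖w x * σ x ^ 2 * gradNormSq (stripCutoff R) x‖ ≤ |K| * (5 / R ^ 2) := fun x hx => by
    have hgrad := gradNormSq_nonneg (stripCutoff R) x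
    have hwσ : 0 ≤ w x * σ x ^ 2 := mul_nonneg (hw0 x (hsub hx)) (sq_nonneg _)
    rw [norm_of_nonneg (mul_nonneg hwσ hgrad)]
    calc w x * σ x ^ 2 * gradNormSq (stripCutoff R) x
        ≤ |K| * (x.2 * (1 - x.2)) ^ 2 * gradNormSq (stripCutoff R) x :=
          mul_le_mul_of_nonneg_right ((hK x (hsub hx)).trans
            (mul_le_mul_of_nonneg_right (le_abs_self K) (sq_nonneg _))) hgrad
      _ = |K| * ((x.2 * (1 - x.2)) ^ 2 * gradNormSq (stripCutoff R) x) := by ring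
      _ ≤ |K| * (5 / R ^ 2) := by gcongr; exact sq_mul_gradNormSq_stripCutoff_le hR hx
  calc ∫ x in stripBox R, stripCutoff R x ^ 2 * (w x * gradNormSq σ x)
      ≤ 4 * ∫ x in stripBox R, w x * σ x ^ 2 * gradNormSq (stripCutoff R) x :=
        integral_sq_mul_gradNormSq_le isOpen_strip hw hσ (contDiffOn_stripCutoff R) hsub
          (fun x hx => hw0 x (hsub hx)) (fun x hx => hdiv x (hsub hx))
          (stripCutoff_eqOn_zero_frontier hR)
    _ ≤ 4 * (|K| * (5 / R ^ 2) * volume.real (stripBox R)) := by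
        gcongr
        exact (le_norm_self _).trans
          (norm_setIntegral_le_of_norm_le_const isCompact_Icc.measure_lt_top hbound)
    _ ≤ 4 * (|K| * (5 / R ^ 2) * (2 * R)) := by gcongr; exact volume_real_stripBox_le hR.le
    _ = 40 * |K| / R := by field_simp; ring

theorem setIntegral_stripBox_le {r R : ℝ} (hw : ContinuousOn w Strip) (hw0 : ∀ x ∈ Strip, 0 ≤ w x)
    (hr : 0 < r) (hR : 4 * r ≤ R) :
    ∫ x in stripBox r, w x ≤ 4 * ∫ x in stripBox R, stripCutoff R x ^ 2 * w x := by
  have hsub : stripBox r ⊆ stripBox R := stripBox_mono (by linarith)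
  have hinteg : ∀ {f : ℝ × ℝ → ℝ} {r : ℝ}, ContinuousOn f Strip → IntegrableOn f (stripBox r) :=
    fun hf => (hf.mono (stripBox_subset_strip _)).integrableOn_compact isCompact_Icc
  have hcut : ContinuousOn (fun x => stripCutoff R x ^ 2 * w x) Strip :=
    ((contDiffOn_stripCutoff R).continuousOn.pow 2).mul hw
  rw [← integral_const_mul]
  calc ∫ x in stripBox r, w x ≤ ∫ x in stripBox r, 4 * (stripCutoff R x ^ 2 * w x) := by
        refine setIntegral_mono_on (hinteg hw) ((hinteg hcut).const_mul 4) measurableSet_Icc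
          fun x hx => ?_
        have hone : 1 ≤ 4 * stripCutoff R x ^ 2 := by nlinarith [half_le_stripCutoff hr hR hx]
        rw [← mul_assoc]
        exact le_mul_of_one_le_left (hw0 x (stripBox_subset_strip r hx)) hone
    _ ≤ ∫ x in stripBox R, 4 * (stripCutoff R x ^ 2 * w x) := by
        refine setIntegral_mono_set ((hinteg hcut).const_mul 4)
          (ae_restrict_of_forall_mem measurableSet_Icc fun x hx => ?_) hsub.eventuallyLE
        have := hw0 x (stripBox_subset_strip R hx)
        simp only [Pi.zero_apply]
        positivity

theorem fderiv_eq_zero_of_divGrad_eq_zero (hw : ContDiffOn ℝ 1 w Strip)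
    (hw0 : ∀ x ∈ Strip, 0 < w x) (hσ : ContDiffOn ℝ 2 σ Strip)
    (hdiv : ∀ x ∈ Strip, divGrad w σ x = 0)
    (hK : ∀ x ∈ Strip, w x * σ x ^ 2 ≤ K * (x.2 * (1 - x.2)) ^ 2) {x : ℝ × ℝ} (hx : x ∈ Strip) :
    fderiv ℝ σ x = 0 := by
  set e : ℝ × ℝ → ℝ := fun y => w y * gradNormSq σ y
  have he : ContinuousOn e Strip :=
    hw.continuousOn.mul (continuousOn_gradNormSq (hσ.of_le one_le_two) isOpen_strip)
  have he0 : ∀ y ∈ Strip, 0 ≤ e y := fun y hy => mul_nonneg (hw0 y hy).le (gradNormSq_nonneg σ y)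
  obtain ⟨r, hr, hxr⟩ := exists_mem_interior_stripBox hx
  have henergy : ∀ R ≥ 4 * r, ∫ y in stripBox r, e y ≤ 4 * (40 * |K| / R) := fun R hR =>
    (setIntegral_stripBox_le he he0 hr hR).trans <| mul_le_mul_of_nonneg_left
      (setIntegral_energy_stripBox_le hw (fun y hy => (hw0 y hy).le) hσ hdiv hK (by linarith))
      zero_le_four
  have hlim : Tendsto (fun R : ℝ => 4 * (40 * |K| / R)) atTop (𝓝 0) := by
    simpa using (tendsto_id.const_div_atTop (40 * |K|)).const_mul 4
  have hnonpos : ∫ y in stripBox r, e y ≤ 0 :=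
    ge_of_tendsto hlim ((eventually_ge_atTop (4 * r)).mono henergy)
  have hsub := stripBox_subset_strip r
  have hzero : e x = 0 := eqOn_zero_interior_of_setIntegral_nonpos measurableSet_Icc (he.mono hsub)
    ((he.mono hsub).integrableOn_compact isCompact_Icc) (fun y hy => he0 y (hsub hy)) hnonpos hxr
  exact fderiv_eq_zero_of_gradNormSq_eq_zero ((mul_eq_zero.1 hzero).resolve_left (hw0 x hx).ne')

end Liouville

section Euler

theorem abs_le_of_lipschitzOnWith_of_endpoints {K : NNReal} {f : ℝ → ℝ}
    (hf : LipschitzOnWith K f (Icc 0 1)) (h0 : f 0 = 0) (h1 : f 1 = 0) {t : ℝ}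
    (ht : t ∈ Icc (0 : ℝ) 1) : |f t| ≤ 2 * K * (t * (1 - t)) := by
  have hbot : |f t| ≤ K * t := by
    simpa [Real.dist_eq, h0, abs_of_nonneg ht.1] using hf.dist_le_mul t ht 0 (by simp)
  have htop : |f t| ≤ K * (1 - t) := by
    simpa [Real.dist_eq, h1, abs_sub_comm t, abs_of_nonneg (sub_nonneg.2 ht.2)] using
      hf.dist_le_mul t ht 1 (by simp)
  nlinarith [mul_le_mul_of_nonneg_left hbot (sub_nonneg.2 ht.2),
    mul_le_mul_of_nonneg_left htop ht.1]

theorem eq_of_fderiv_sub_eq_zero {E F : Type*} [NormedAddCommGroup E] [NormedSpace ℝ E]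
    [NormedAddCommGroup F] [NormedSpace ℝ F] {s : Set E} (hs : IsOpen s) (hconv : Convex ℝ s)
    {f : E → F} (hf : DifferentiableOn ℝ f s) (hcont : ContinuousOn f (closure s)) {x y : E}
    (hx : x ∈ s) (hy : y ∈ closure s) (hderiv : ∀ z ∈ s, fderiv ℝ f z (y - x) = 0) :
    f y = f x := by
  have hclosure : ∀ t ∈ Icc (0 : ℝ) 1, AffineMap.lineMap x y t ∈ closure s := fun t ht =>
    hconv.closure.lineMap_mem (subset_closure hx) hy ht
  have hinner : ∀ t ∈ Ico (0 : ℝ) 1, AffineMap.lineMap x y t ∈ s := fun t ht => by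
    rw [AffineMap.lineMap_apply_module]
    exact hs.interior_eq ▸ hconv.combo_interior_closure_mem_interior (hs.interior_eq.symm ▸ hx) hy
      (sub_pos.2 ht.2) ht.1 (sub_add_cancel 1 t)
  have hconst := constant_of_has_deriv_right_zero
    (hcont.comp (AffineMap.lineMap_continuous (p := x) (q := y)).continuousOn hclosure)
    (fun t ht => by
      have hz := (hf.differentiableAt (hs.mem_nhds (hinner t ht))).hasFDerivAt.comp_hasDerivAt t
        AffineMap.hasDerivAt_lineMap
      rw [hderiv _ (hinner t ht)] at hz
      exact hz.hasDerivWithinAt) 1 (by simp)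
  simpa using hconst

/-- The slope `u₂ / u₁` of the streamlines of the flow `u`; it is only meaningful where
`u₁ ≠ 0`. -/
def flowSlope (u : ℝ × ℝ → ℝ × ℝ) (x : ℝ × ℝ) : ℝ := (u x).2 / (u x).1

namespace IsEulerSlipStrip

variable {u : ℝ × ℝ → ℝ × ℝ} {p : ℝ × ℝ → ℝ}

theorem contDiffOn_fst (hu : IsEulerSlipStrip u p) : ContDiffOn ℝ 2 (fun x => (u x).1) Strip :=
  hu.1.fst

theorem contDiffOn_snd (hu : IsEulerSlipStrip u p) : ContDiffOn ℝ 2 (fun x => (u x).2) Strip :=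
  hu.1.snd

theorem continuousOn_closure (hu : IsEulerSlipStrip u p) : ContinuousOn u (closure Strip) :=
  let ⟨_, hK⟩ := hu.2.1
  hK.continuousOn

theorem pd1_pressure (hu : IsEulerSlipStrip u p) {x : ℝ × ℝ} (hx : x ∈ Strip) :
    pd1 p x = (u x).1 * pd2 (fun y => (u y).2) x - (u x).2 * pd2 (fun y => (u y).1) x := by
  obtain ⟨hmomentum, -, hincompressible⟩ := hu.2.2.2.1 x hx
  linear_combination hmomentum - (u x).1 * hincompressible

theorem pd2_pressure (hu : IsEulerSlipStrip u p) {x : ℝ × ℝ} (hx : x ∈ Strip) :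
    pd2 p x = -((u x).1 * pd1 (fun y => (u y).2) x - (u x).2 * pd1 (fun y => (u y).1) x) := by
  obtain ⟨-, hmomentum, hincompressible⟩ := hu.2.2.2.1 x hx
  linear_combination hmomentum - (u x).2 * hincompressible

theorem contDiffOn_pressure (hu : IsEulerSlipStrip u p) : ContDiffOn ℝ 2 p Strip := by
  have h1 := hu.contDiffOn_fst
  have h2 := hu.contDiffOn_snd
  have hle : (1 : WithTop ℕ∞) + 1 ≤ 2 := one_add_one_eq_two.le
  refine contDiffOn_succ_of_pd (n := 1) isOpen_strip (hu.2.2.1.differentiableOn one_ne_zero) ?_ ?_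
  · exact (((h1.of_le one_le_two).mul (contDiffOn_pd2 h2 isOpen_strip hle)).sub
      ((h2.of_le one_le_two).mul (contDiffOn_pd2 h1 isOpen_strip hle))).congr
        fun x hx => hu.pd1_pressure hx
  · exact (((h1.of_le one_le_two).mul (contDiffOn_pd1 h2 isOpen_strip hle)).sub
      ((h2.of_le one_le_two).mul (contDiffOn_pd1 h1 isOpen_strip hle))).neg.congr
        fun x hx => hu.pd2_pressure hx

theorem exists_abs_snd_le (hu : IsEulerSlipStrip u p) :
    ∃ K, ∀ x ∈ Strip, |(u x).2| ≤ K * (x.2 * (1 - x.2)) := by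
  obtain ⟨-, ⟨K, hK⟩, -, -, hslip⟩ := hu
  refine ⟨2 * K, fun x hx => ?_⟩
  have hvertical : LipschitzOnWith K (Prod.snd ∘ u ∘ Prod.mk x.1) (Icc 0 1) := by
    simpa using LipschitzWith.prod_snd.comp_lipschitzOnWith
      (hK.comp (LipschitzWith.prodMk_left x.1).lipschitzOnWith fun t ht => mem_closure_strip.2 ht)
  exact abs_le_of_lipschitzOnWith_of_endpoints hvertical (hslip x.1).1 (hslip x.1).2
    ⟨hx.1.le, hx.2.le⟩

theorem contDiffOn_flowSlope (hu : IsEulerSlipStrip u p) (hu1 : ∀ x ∈ Strip, (u x).1 ≠ 0) :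
    ContDiffOn ℝ 2 (flowSlope u) Strip :=
  hu.contDiffOn_snd.div hu.contDiffOn_fst hu1

theorem divGrad_flowSlope (hu : IsEulerSlipStrip u p) (hu1 : ∀ x ∈ Strip, (u x).1 ≠ 0)
    {x : ℝ × ℝ} (hx : x ∈ Strip) : divGrad (fun y => (u y).1 ^ 2) (flowSlope u) x = 0 := by
  have hslope : ∀ y ∈ Strip, ∀ v, (u y).1 ^ 2 * fderiv ℝ (flowSlope u) y v =
      (u y).1 * fderiv ℝ (fun z => (u z).2) y v - (u y).2 * fderiv ℝ (fun z => (u z).1) y v :=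
    fun y hy => sq_mul_fderiv_div_apply
      (differentiableAt_of_contDiffOn hu.contDiffOn_snd two_ne_zero isOpen_strip hy)
      (differentiableAt_of_contDiffOn hu.contDiffOn_fst two_ne_zero isOpen_strip hy) (hu1 y hy)
  have hflux1 : (fun y => (u y).1 ^ 2 * pd1 (flowSlope u) y) =ᶠ[𝓝 x] fun y => -pd2 p y := by
    filter_upwards [isOpen_strip.mem_nhds hx] with y hy
    rw [hu.pd2_pressure hy, neg_neg]
    exact hslope y hy (1, 0)
  have hflux2 : (fun y => (u y).1 ^ 2 * pd2 (flowSlope u) y) =ᶠ[𝓝 x] pd1 p := by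
    filter_upwards [isOpen_strip.mem_nhds hx] with y hy
    rw [hu.pd1_pressure hy]
    exact hslope y hy (0, 1)
  have hcomm := pd1_pd2_comm (hu.contDiffOn_pressure.contDiffAt (isOpen_strip.mem_nhds hx))
  rw [divGrad, pd1, pd2, hflux1.fderiv_eq, hflux2.fderiv_eq, fderiv_fun_neg]
  exact neg_add_eq_zero.2 hcomm

theorem fderiv_flowSlope_eq_zero (hu : IsEulerSlipStrip u p) (hu1 : ∀ x ∈ Strip, (u x).1 ≠ 0)
    {x : ℝ × ℝ} (hx : x ∈ Strip) : fderiv ℝ (flowSlope u) x = 0 := by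
  obtain ⟨K, hK⟩ := hu.exists_abs_snd_le
  refine fderiv_eq_zero_of_divGrad_eq_zero (K := K ^ 2)
    ((hu.contDiffOn_fst.of_le one_le_two).pow 2) (fun y hy => sq_pos_iff.2 (hu1 y hy))
    (hu.contDiffOn_flowSlope hu1) (fun y hy => hu.divGrad_flowSlope hu1 hy) (fun y hy => ?_) hx
  calc (u y).1 ^ 2 * flowSlope u y ^ 2 = |(u y).2| ^ 2 := by
        rw [← mul_pow, flowSlope, mul_div_cancel₀ _ (hu1 y hy), sq_abs]
    _ ≤ (K * (y.2 * (1 - y.2))) ^ 2 := by gcongr; exact hK y hy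
    _ = K ^ 2 * (y.2 * (1 - y.2)) ^ 2 := mul_pow _ _ _

theorem exists_snd_eq_const_mul_fst (hu : IsEulerSlipStrip u p)
    (hu1 : ∀ x ∈ Strip, (u x).1 ≠ 0) :
    ∃ c, EqOn (fun x => (u x).2) (fun x => c * (u x).1) (closure Strip) := by
  obtain ⟨c, hc⟩ := isOpen_strip.exists_is_const_of_fderiv_eq_zero convex_strip.isPreconnected
    ((hu.contDiffOn_flowSlope hu1).differentiableOn two_ne_zero)
    fun x hx => hu.fderiv_flowSlope_eq_zero hu1 hx
  refine ⟨c, EqOn.of_subset_closure (fun x hx => ?_) hu.continuousOn_closure.snd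
    (continuousOn_const.mul hu.continuousOn_closure.fst) subset_closure subset_rfl⟩
  exact (div_eq_iff (hu1 x hx)).1 (hc x hx)

theorem fst_eq_of_sub_eq_smul (hu : IsEulerSlipStrip u p) {c : ℝ}
    (hc : EqOn (fun x => (u x).2) (fun x => c * (u x).1) (closure Strip)) {x y : ℝ × ℝ} {k : ℝ}
    (hx : x ∈ Strip) (hy : y ∈ closure Strip) (hxy : y - x = k • (1, c)) : (u y).1 = (u x).1 := by
  refine eq_of_fderiv_sub_eq_zero isOpen_strip convex_strip
    (hu.contDiffOn_fst.differentiableOn two_ne_zero) hu.continuousOn_closure.fst hx hy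
    fun z hz => ?_
  have hdiff := differentiableAt_of_contDiffOn hu.contDiffOn_fst two_ne_zero isOpen_strip hz
  have hnear : (fun x => (u x).2) =ᶠ[𝓝 z] fun x => c * (u x).1 := by
    filter_upwards [isOpen_strip.mem_nhds hz] with w hw using hc (subset_closure hw)
  have hpd2 : pd2 (fun x => (u x).2) z = c * pd2 (fun x => (u x).1) z := by
    simp [pd2, hnear.fderiv_eq, fderiv_const_mul hdiff]
  have hincompressible := (hu.2.2.2.1 z hz).2.2
  rw [hpd2] at hincompressible
  rw [hxy, map_smul, fderiv_apply_eq_pd, one_mul, hincompressible, smul_zero]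

theorem snd_eq_zero (hu : IsEulerSlipStrip u p) (hu1 : ∀ x ∈ Strip, (u x).1 ≠ 0) {x : ℝ × ℝ}
    (hx : x ∈ closure Strip) : (u x).2 = 0 := by
  obtain ⟨c, hc⟩ := hu.exists_snd_eq_const_mul_fst hu1
  have hc0 : c = 0 := by
    by_contra hc0
    have hmid : ((0, 1 / 2) : ℝ × ℝ) ∈ Strip := by norm_num [Strip]
    have hwall : ((1 / (2 * c), 1) : ℝ × ℝ) ∈ closure Strip := mem_closure_strip.2 (by simp)
    have hline : ((1 / (2 * c), 1) : ℝ × ℝ) - (0, 1 / 2) = (1 / (2 * c)) • (1, c) := by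
      ext
      · simp
      · simp only [Prod.snd_sub, Prod.smul_snd, smul_eq_mul]
        field_simp
        norm_num
    have hslip : c * (u (1 / (2 * c), 1)).1 = 0 := (hc hwall).symm.trans (hu.2.2.2.2 _).2
    exact hu1 _ hmid (hu.fst_eq_of_sub_eq_smul hc hmid hwall hline ▸
      (mul_eq_zero.1 hslip).resolve_left hc0)
  simpa [hc0] using hc hx

theorem eq_shear (hu : IsEulerSlipStrip u p) (hu1 : ∀ x ∈ Strip, (u x).1 ≠ 0) (a : ℝ) :
    EqOn u (fun x => ((u (a, x.2)).1, 0)) (closure Strip) := by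
  have hc : EqOn (fun x => (u x).2) (fun x => 0 * (u x).1) (closure Strip) := fun x hx => by
    simpa using hu.snd_eq_zero hu1 hx
  have hmaps : MapsTo (fun x : ℝ × ℝ => (a, x.2)) (closure Strip) (closure Strip) := fun x hx =>
    mem_closure_strip.2 ((mem_closure_strip (x := x)).1 hx)
  have hfst : EqOn (fun x => (u x).1) (fun x => (u (a, x.2)).1) (closure Strip) := by
    refine EqOn.of_subset_closure (fun x hx => ?_) hu.continuousOn_closure.fst
      (hu.continuousOn_closure.fst.comp (by fun_prop) hmaps) subset_closure subset_rfl
    exact (hu.fst_eq_of_sub_eq_smul hc hx (hmaps (subset_closure hx)) (k := a - x.1)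
      (by ext <;> simp)).symm
  exact fun x hx => Prod.ext (hfst hx) (hu.snd_eq_zero hu1 hx)

end IsEulerSlipStrip

end Euler

theorem stmt1_general {u : ℝ × ℝ → ℝ × ℝ} {p : ℝ × ℝ → ℝ} (hu : IsEulerSlipStrip u p)
    (hu1 : ∀ x ∈ Strip, (u x).1 ≠ 0) {l : Filter ℝ} [l.NeBot] {f : ℝ → ℝ}
    (hlim : ∀ x₂ ∈ Icc (0 : ℝ) 1, Tendsto (fun x₁ => (u (x₁, x₂)).1) l (𝓝 (f x₂))) :
    ∀ x ∈ closure Strip, u x = (f x.2, 0) := by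
  intro x hx
  have hconst : (fun a => (u (a, x.2)).1) = fun _ => (u x).1 :=
    funext fun a => (congrArg Prod.fst (hu.eq_shear hu1 a hx)).symm
  have hfst := hlim x.2 (mem_closure_strip.1 hx)
  rw [hconst] at hfst
  exact Prod.ext (tendsto_nhds_unique tendsto_const_nhds hfst) (hu.snd_eq_zero hu1 hx)

/-- Liouville type theorem for Poiseuille flows: a solution of the steady incompressible
Euler system in the strip `ℝ × (0,1)` with slip condition, positive horizontal velocity,
and upstream far-field state `6Qx₂(1−x₂)` must be the Poiseuille flow. -/
theorem stmt1
    (Q : ℝ) (hQ : 0 < Q)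
    (u : ℝ × ℝ → ℝ × ℝ) (p : ℝ × ℝ → ℝ)
    (hu : IsEulerSlipStrip u p)
    (hu1 : ∀ x ∈ Strip, 0 < (u x).1)
    (huf : ∀ ε > 0, ∃ M : ℝ, ∀ x₁ ≤ M, ∀ x₂ ∈ Set.Icc (0 : ℝ) 1,
      |(u (x₁, x₂)).1 - 6 * Q * x₂ * (1 - x₂)| < ε) :
    ∀ x ∈ closure Strip, u x = (6 * Q * x.2 * (1 - x.2), 0) :=
  stmt1_general hu (fun x hx => (hu1 x hx).ne') fun x₂ hx₂ => Metric.tendsto_nhds.2 fun ε hε =>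
    eventually_atBot.2 ((huf ε hε).imp fun _ hM x₁ hx₁ => hM x₁ hx₁ x₂ hx₂)
end
end
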